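/- arXiv:2506.09618 — 8 statements merged into one kernel-verified Lean document; each statement's English description precedes it below -/
import Mathlib

section
/- Let C be an arbitrary set of corner-interval minors of M. If {x_{ij}, x_{lj}} (with i ≠ l) is a vertical interval of C with j ≠ 1, then the binomial x_{i1}x_{lj} − x_{l1}x_{ij} belongs to the toric ideal J_C. -/
open MvPolynomial

/-- A 2-minor `[a₁,a₂|b₁,b₂]` (with `a₁ < a₂`, `b₁ < b₂`) of the `m × n` matrix
of indeterminates `M = (x_{ij})`. -/
structure Minor2 (m n : ℕ) where
  a1 : Fin m
  a2 : Fin m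
  b1 : Fin n
  b2 : Fin n
  ha : a1 < a2
  hb : b1 < b2

namespace Minor2

variable {m n : ℕ}

/-- The vertex set of a 2-minor. -/
def vertexSet (δ : Minor2 m n) : Set (Fin m × Fin n) :=
  {(δ.a1, δ.b1), (δ.a1, δ.b2), (δ.a2, δ.b1), (δ.a2, δ.b2)}

/-- `{p,q}` is one of the two vertical edges of the minor `δ`. -/
def VertEdge (δ : Minor2 m n) (p q : Fin m × Fin n) : Prop :=
  ({p, q} : Set (Fin m × Fin n)) = {(δ.a1, δ.b1), (δ.a2, δ.b1)} ∨
  ({p, q} : Set (Fin m × Fin n)) = {(δ.a1, δ.b2), (δ.a2, δ.b2)}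

/-- `{p,q}` is one of the two horizontal edges of the minor `δ`. -/
def HorizEdge (δ : Minor2 m n) (p q : Fin m × Fin n) : Prop :=
  ({p, q} : Set (Fin m × Fin n)) = {(δ.a1, δ.b1), (δ.a1, δ.b2)} ∨
  ({p, q} : Set (Fin m × Fin n)) = {(δ.a2, δ.b1), (δ.a2, δ.b2)}

/-- `{p,q}` is an edge (vertical or horizontal) of the minor `δ`. -/
def IsEdge (δ : Minor2 m n) (p q : Fin m × Fin n) : Prop :=
  δ.VertEdge p q ∨ δ.HorizEdge p q

/-- The binomial `f_δ = x_{a₁b₁}x_{a₂b₂} − x_{a₁b₂}x_{a₂b₁}` of the 2-minor `δ`. -/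
noncomputable def binom (K : Type*) [Field K] (δ : Minor2 m n) : MvPolynomial (Fin m × Fin n) K :=
  X (δ.a1, δ.b1) * X (δ.a2, δ.b2) - X (δ.a1, δ.b2) * X (δ.a2, δ.b1)

end Minor2

/-- The vertex set `V(C)` of a collection `C` of 2-minors. -/
def vertexSetOf {m n : ℕ} (C : Set (Minor2 m n)) : Set (Fin m × Fin n) :=
  ⋃ δ ∈ C, δ.vertexSet

/-- The binomial ideal `I(C)` generated by the binomials of the minors in `C`. -/
noncomputable def minorIdeal (K : Type*) [Field K] {m n : ℕ} (C : Set (Minor2 m n)) :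
    Ideal (MvPolynomial (Fin m × Fin n) K) :=
  Ideal.span {f | ∃ δ ∈ C, f = Minor2.binom K δ}

/-- Two positions are joined by a vertical edge of some minor of `C`. -/
def vertAdj {m n : ℕ} (C : Set (Minor2 m n)) (p q : Fin m × Fin n) : Prop :=
  ∃ δ ∈ C, δ.VertEdge p q

/-- Two positions are joined by a horizontal edge of some minor of `C`. -/
def horizAdj {m n : ℕ} (C : Set (Minor2 m n)) (p q : Fin m × Fin n) : Prop :=
  ∃ δ ∈ C, δ.HorizEdge p q

/-- The maximal vertical interval of `C` containing a position, encoded as the class of the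
position under connectivity by vertical edges of minors of `C`. -/
def vClass {m n : ℕ} (C : Set (Minor2 m n)) (p : Fin m × Fin n) : Quot (vertAdj C) :=
  Quot.mk _ p

/-- The maximal horizontal interval of `C` containing a position. -/
def hClass {m n : ℕ} (C : Set (Minor2 m n)) (p : Fin m × Fin n) : Quot (horizAdj C) :=
  Quot.mk _ p

/-- The monomial map `φ` with `φ(x_{ab}) = h_i v_j`, where `H_i` and `V_j` are the maximal
horizontal and vertical intervals of `C` containing `x_{ab}` (variables not appearing in any
minor of `C` are sent to products of fresh variables, so that the kernel of `φ` is the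
extension to `S` of the toric ideal `J_C ⊆ S_C`). -/
noncomputable def phiC (K : Type*) [Field K] {m n : ℕ} (C : Set (Minor2 m n)) :
    MvPolynomial (Fin m × Fin n) K →ₐ[K]
      MvPolynomial (Quot (horizAdj C) ⊕ Quot (vertAdj C)) K :=
  aeval fun p => X (Sum.inl (hClass C p)) * X (Sum.inr (vClass C p))

/-- The toric ideal `J_C = ker φ`. -/
noncomputable def toricIdeal (K : Type*) [Field K] {m n : ℕ} (C : Set (Minor2 m n)) :
    Ideal (MvPolynomial (Fin m × Fin n) K) :=
  RingHom.ker (phiC K C)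

/-- A subset `W ⊆ V(C)` is admissible if for every `δ ∈ C` either `W ∩ V(δ) = ∅`
or `W` contains an edge of `δ`. -/
def Admissible {m n : ℕ} (C : Set (Minor2 m n)) (W : Set (Fin m × Fin n)) : Prop :=
  W ⊆ vertexSetOf C ∧
    ∀ δ ∈ C, W ∩ δ.vertexSet = ∅ ∨ ∃ p q, p ∈ W ∧ q ∈ W ∧ δ.IsEdge p q

/-- `C' = {δ ∈ C : V(δ) ∩ W = ∅}`. -/
def minorsAvoiding {m n : ℕ} (C : Set (Minor2 m n)) (W : Set (Fin m × Fin n)) :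
    Set (Minor2 m n) :=
  {δ ∈ C | δ.vertexSet ∩ W = ∅}

/-- The ideal generated by the variables with index in `W`. -/
noncomputable def varIdeal (K : Type*) [Field K] {m n : ℕ} (W : Set (Fin m × Fin n)) :
    Ideal (MvPolynomial (Fin m × Fin n) K) :=
  Ideal.span ((fun p => (X p : MvPolynomial (Fin m × Fin n) K)) '' W)

/-- The prime ideal `P_W(C) = (x_{ij} : x_{ij} ∈ W) + J_{C'}`,
where `C' = {δ ∈ C : V(δ) ∩ W = ∅}`. -/
noncomputable def PW (K : Type*) [Field K] {m n : ℕ} (C : Set (Minor2 m n))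
    (W : Set (Fin m × Fin n)) : Ideal (MvPolynomial (Fin m × Fin n) K) :=
  varIdeal K W + toricIdeal K (minorsAvoiding C W)

/-- A cycle `σ : h_{i₁}, v_{j₁}, h_{i₂}, v_{j₂}, …, h_{i_r}, v_{j_r}` (`r ≥ 2`) of the
bipartite graph `G(C)`, recorded by the intersection vertices
`p k = H_{i_k} ∩ V_{j_k}` and `q k = H_{i_{k+1}} ∩ V_{j_k}` (indices cyclic, `r = len + 2`). -/
structure CycleIn {m n : ℕ} (C : Set (Minor2 m n)) where
  len : ℕ
  p : Fin (len + 2) → Fin m × Fin n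
  q : Fin (len + 2) → Fin m × Fin n
  p_mem : ∀ k, p k ∈ vertexSetOf C
  q_mem : ∀ k, q k ∈ vertexSetOf C
  shareV : ∀ k, vClass C (p k) = vClass C (q k)
  shareH : ∀ k, hClass C (q k) = hClass C (p (k + 1))
  injH : Function.Injective fun k => hClass C (p k)
  injV : Function.Injective fun k => vClass C (p k)

/-- The binomial `f_σ` associated to a cycle `σ` of `G(C)`. -/
noncomputable def cycleBinom (K : Type*) [Field K] {m n : ℕ} {C : Set (Minor2 m n)}
    (σ : CycleIn C) : MvPolynomial (Fin m × Fin n) K :=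
  (∏ k, X (σ.p k)) - (∏ k, X (σ.q k))

theorem horiz_aux {m n : ℕ} [NeZero n] (C : Set (Minor2 m n)) (hC : ∀ δ ∈ C, δ.b1 = 0)
    (i : Fin m) (j : Fin n) (hj : j ≠ 0) (hiC : (i, j) ∈ vertexSetOf C) :
    hClass C (i, 0) = hClass C (i, j) := by
  simp only [vertexSetOf, Set.mem_iUnion, Minor2.vertexSet, Set.mem_insert_iff,
    Set.mem_singleton_iff, Prod.mk.injEq] at hiC
  obtain ⟨δ, hδ, h⟩ := hiC
  have h0 := hC δ hδ
  apply Quot.sound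
  refine ⟨δ, hδ, ?_⟩
  unfold Minor2.HorizEdge
  rw [h0] at h ⊢
  rcases h with ⟨h1, h2⟩ | ⟨h1, h2⟩ | ⟨h1, h2⟩ | ⟨h1, h2⟩
  · exact absurd h2 hj
  · left; rw [h1, h2]
  · exact absurd h2 hj
  · right; rw [h1, h2]

theorem vert_step {m n : ℕ} [NeZero n] (C : Set (Minor2 m n)) (hC : ∀ δ ∈ C, δ.b1 = 0)
    (p q : Fin m × Fin n) (hj : p.2 ≠ 0) (h : vertAdj C p q) :
    q.2 = p.2 ∧ vClass C (p.1, 0) = vClass C (q.1, 0) := by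
  obtain ⟨δ, hδ, h⟩ := h
  have h0 := hC δ hδ
  obtain ⟨a, b⟩ := p
  obtain ⟨c, d⟩ := q
  unfold Minor2.VertEdge at h
  rw [h0, Set.pair_eq_pair_iff, Set.pair_eq_pair_iff] at h
  simp only [Prod.mk.injEq] at h hj ⊢
  have key : vClass C (δ.a1, 0) = vClass C (δ.a2, 0) :=
    Quot.sound ⟨δ, hδ, Or.inl (by rw [h0])⟩
  rcases h with (⟨⟨h1, h2⟩, h3, h4⟩ | ⟨⟨h1, h2⟩, h3, h4⟩) | (⟨⟨h1, h2⟩, h3, h4⟩ | ⟨⟨h1, h2⟩, h3, h4⟩)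
  · exact absurd h2 hj
  · exact absurd h2 hj
  · exact ⟨h4.trans h2.symm, by rw [h1, h3, key]⟩
  · exact ⟨h4.trans h2.symm, by rw [h1, h3, key]⟩

theorem statement0 (K : Type*) [Field K] (m n : ℕ) [NeZero n]
    (C : Set (Minor2 m n)) (hC : ∀ δ ∈ C, δ.b1 = 0)
    (i l : Fin m) (j : Fin n) (hil : i ≠ l) (hj : j ≠ 0)
    (hiC : (i, j) ∈ vertexSetOf C) (hlC : (l, j) ∈ vertexSetOf C)
    (hpath : Relation.ReflTransGen (vertAdj C) (i, j) (l, j)) :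
    X (i, (0 : Fin n)) * X (l, j) - X (l, (0 : Fin n)) * X (i, j) ∈ toricIdeal K C := by
  have H : ∀ q, Relation.ReflTransGen (vertAdj C) (i, j) q →
      q.2 = j ∧ vClass C (i, 0) = vClass C (q.1, 0) ∧ vClass C (i, j) = vClass C q := by
    intro q hq
    induction hq with
    | refl => exact ⟨rfl, rfl, rfl⟩
    | tail _ hbc ih =>
      obtain ⟨h1, h2, h3⟩ := ih
      obtain ⟨h4, h5⟩ := vert_step C hC _ _ (by rw [h1]; exact hj) hbc
      exact ⟨h4.trans h1, h2.trans h5, h3.trans (Quot.sound hbc)⟩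
  obtain ⟨-, h2, h3⟩ := H _ hpath
  have h2' : vClass C (i, 0) = vClass C (l, 0) := h2
  have hi := horiz_aux C hC i j hj hiC
  have hl := horiz_aux C hC l j hj hlC
  rw [toricIdeal, RingHom.mem_ker]
  simp only [phiC, map_sub, map_mul, aeval_X]
  rw [hi, hl, h2', h3]
  ring
end

section
/- Let C be an arbitrary set of corner-interval minors of M and let x = ∏_{x_{ij} ∈ V(C)} x_{ij} be the product of all variables of V(C). Then the saturation of I(C) with respect to x equals the toric ideal J_C; that is, for f ∈ S_C one has f ∈ J_C if and only if x^k f ∈ I(C) for some k ≥ 0. -/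
open MvPolynomial

theorem vert_mem_row {m n : ℕ} [NeZero n] (C : Set (Minor2 m n)) (hC : ∀ δ ∈ C, δ.b1 = 0)
    (p : Fin m × Fin n) (hp : p ∈ vertexSetOf C) : (p.1, (0 : Fin n)) ∈ vertexSetOf C := by
  simp only [vertexSetOf, Set.mem_iUnion] at hp ⊢
  obtain ⟨δ, hδ, h⟩ := hp
  refine ⟨δ, hδ, ?_⟩
  have h0 := hC δ hδ
  simp only [Minor2.vertexSet, Set.mem_insert_iff, Set.mem_singleton_iff] at h ⊢
  rcases h with h | h | h | h <;> simp [h, h0]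

theorem mem_vert {m n : ℕ} (C : Set (Minor2 m n)) (δ : Minor2 m n) (hδ : δ ∈ C)
    (p : Fin m × Fin n) (hp : p ∈ δ.vertexSet) : p ∈ vertexSetOf C := by
  simp only [vertexSetOf, Set.mem_iUnion]
  exact ⟨δ, hδ, hp⟩

theorem pair_cases {α : Type*} {p q r s : α} (h : ({p, q} : Set α) = {r, s}) :
    (p = r ∧ q = s) ∨ (p = s ∧ q = r) := by
  exact Set.pair_eq_pair_iff.mp h

open Classical in
theorem key_factor {m n : ℕ} [NeZero n] (K : Type*) [Field K]
    (C : Set (Minor2 m n)) (hC : ∀ δ ∈ C, δ.b1 = 0)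
    {L : Type*} [CommRing L] [Algebra K L] (π : MvPolynomial (Fin m × Fin n) K →ₐ[K] L)
    (hu : ∀ p ∈ vertexSetOf C, IsUnit (π (X p)))
    (hI : ∀ δ ∈ C, π (Minor2.binom K δ) = 0)
    (f : MvPolynomial (Fin m × Fin n) K) (hf : phiC K C f = 0) : π f = 0 := by
  let hval : Fin m × Fin n → L := fun p =>
    if p ∈ vertexSetOf C then π (X (p.1, 0)) else π (X p)
  let vval : Fin m × Fin n → L := fun p =>
    if p ∈ vertexSetOf C then π (X p) * Ring.inverse (π (X (p.1, 0))) else 1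
  have hh : ∀ p q, horizAdj C p q → hval p = hval q := by
    rintro p q ⟨δ, hδ, h⟩
    have m1 := mem_vert C δ hδ (δ.a1, δ.b1) (by simp [Minor2.vertexSet])
    have m2 := mem_vert C δ hδ (δ.a1, δ.b2) (by simp [Minor2.vertexSet])
    have m3 := mem_vert C δ hδ (δ.a2, δ.b1) (by simp [Minor2.vertexSet])
    have m4 := mem_vert C δ hδ (δ.a2, δ.b2) (by simp [Minor2.vertexSet])
    rcases h with h | h <;> rcases pair_cases h with ⟨rfl, rfl⟩ | ⟨rfl, rfl⟩ <;>
      simp [hval, m1, m2, m3, m4]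
  have hv : ∀ p q, vertAdj C p q → vval p = vval q := by
    rintro p q ⟨δ, hδ, h⟩
    have m1 := mem_vert C δ hδ (δ.a1, δ.b1) (by simp [Minor2.vertexSet])
    have m2 := mem_vert C δ hδ (δ.a1, δ.b2) (by simp [Minor2.vertexSet])
    have m3 := mem_vert C δ hδ (δ.a2, δ.b1) (by simp [Minor2.vertexSet])
    have m4 := mem_vert C δ hδ (δ.a2, δ.b2) (by simp [Minor2.vertexSet])
    have h0 := hI δ hδ
    simp only [Minor2.binom, map_sub, map_mul] at h0
    unfold Minor2.VertEdge at h
    rw [hC δ hδ] at h0 m1 m3 h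
    have c1 := Ring.mul_inverse_cancel _ (hu _ m1)
    have c3 := Ring.mul_inverse_cancel _ (hu _ m3)
    have e1 : vval (δ.a1, 0) = 1 := by simp [vval, m1, c1]
    have e3 : vval (δ.a2, 0) = 1 := by simp [vval, m3, c3]
    have e24 : vval (δ.a1, δ.b2) = vval (δ.a2, δ.b2) := by
      simp only [vval, m2, m4, if_true]
      generalize Ring.inverse (π (X (δ.a1, 0))) = i1 at *
      generalize Ring.inverse (π (X (δ.a2, 0))) = i3 at *
      linear_combination (-i1 * i3) * h0 + (-π (X (δ.a1, δ.b2)) * i1) * c3 +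
        (π (X (δ.a2, δ.b2)) * i3) * c1
    rcases h with h | h <;> rcases pair_cases h with ⟨rfl, rfl⟩ | ⟨rfl, rfl⟩
    · rw [e1, e3]
    · rw [e1, e3]
    · exact e24
    · exact e24.symm
  let ψ : MvPolynomial (Quot (horizAdj C) ⊕ Quot (vertAdj C)) K →ₐ[K] L :=
    aeval (Sum.elim (Quot.lift hval hh) (Quot.lift vval hv))
  have hcomp : ψ.comp (phiC K C) = π := by
    apply MvPolynomial.algHom_ext
    intro p
    have : ψ (phiC K C (X p)) = hval p * vval p := by
      simp [phiC, ψ, hClass, vClass]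
    rw [AlgHom.comp_apply, this]
    by_cases hp : p ∈ vertexSetOf C
    · have c := Ring.mul_inverse_cancel _ (hu _ (vert_mem_row C hC p hp))
      simp only [hval, vval, hp, if_true]
      linear_combination (π (X p)) * c
    · simp [hval, vval, hp]
  rw [← hcomp, AlgHom.comp_apply, hf, map_zero]

theorem phi_binom {m n : ℕ} (K : Type*) [Field K] (C : Set (Minor2 m n))
    (δ : Minor2 m n) (hδ : δ ∈ C) : phiC K C (Minor2.binom K δ) = 0 := by
  have h1 : hClass C (δ.a1, δ.b1) = hClass C (δ.a1, δ.b2) := Quot.sound ⟨δ, hδ, Or.inl rfl⟩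
  have h2 : hClass C (δ.a2, δ.b1) = hClass C (δ.a2, δ.b2) := Quot.sound ⟨δ, hδ, Or.inr rfl⟩
  have v1 : vClass C (δ.a1, δ.b1) = vClass C (δ.a2, δ.b1) := Quot.sound ⟨δ, hδ, Or.inl rfl⟩
  have v2 : vClass C (δ.a1, δ.b2) = vClass C (δ.a2, δ.b2) := Quot.sound ⟨δ, hδ, Or.inr rfl⟩
  simp only [phiC, Minor2.binom, map_sub, map_mul, aeval_X, h1, h2, v1, v2]
  ring

theorem statement1 (K : Type*) [Field K] (m n : ℕ) [NeZero n]
    (C : Set (Minor2 m n)) (hC : ∀ δ ∈ C, δ.b1 = 0)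
    (f : MvPolynomial (Fin m × Fin n) K) :
    f ∈ toricIdeal K C ↔
      ∃ k : ℕ, (∏ p ∈ (Set.toFinite (vertexSetOf C)).toFinset, X p) ^ k * f ∈
        minorIdeal K C := by
  constructor
  · intro hf
    have hf' : phiC K C f = 0 := hf
    set x : MvPolynomial (Fin m × Fin n) K :=
      ∏ p ∈ (Set.toFinite (vertexSetOf C)).toFinset, X p with hx
    let A := MvPolynomial (Fin m × Fin n) K ⧸ minorIdeal K C
    let y : A := Ideal.Quotient.mk (minorIdeal K C) x
    let L := Localization.Away y
    let π : MvPolynomial (Fin m × Fin n) K →ₐ[K] L :=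
      (IsScalarTower.toAlgHom K A L).comp (Ideal.Quotient.mkₐ K (minorIdeal K C))
    have hπ : ∀ g, π g = algebraMap A L (Ideal.Quotient.mk (minorIdeal K C) g) := fun g => rfl
    have hux : IsUnit (π x) := by
      rw [hπ]; exact IsLocalization.Away.algebraMap_isUnit y
    have h0 : π f = 0 := by
      refine key_factor K C hC π ?_ ?_ f hf'
      · intro p hp
        refine isUnit_of_dvd_unit ?_ hux
        exact map_dvd π (Finset.dvd_prod_of_mem _ (by simpa using hp))
      · intro δ hδ
        rw [hπ, Ideal.Quotient.eq_zero_iff_mem.mpr, map_zero]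
        exact Ideal.subset_span ⟨δ, hδ, rfl⟩
    rw [hπ, IsLocalization.map_eq_zero_iff (Submonoid.powers y)] at h0
    obtain ⟨⟨_, k, rfl⟩, hk⟩ := h0
    refine ⟨k, ?_⟩
    rw [← Ideal.Quotient.eq_zero_iff_mem, map_mul, map_pow]
    exact hk
  · rintro ⟨k, hk⟩
    have hle : minorIdeal K C ≤ toricIdeal K C := by
      refine Ideal.span_le.mpr ?_
      rintro _ ⟨δ, hδ, rfl⟩
      exact phi_binom K C δ hδ
    have h := hle hk
    change phiC K C _ = 0 at h
    change phiC K C f = 0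
    rw [map_mul, map_pow, map_prod] at h
    refine (mul_eq_zero.mp h).resolve_left (pow_ne_zero _ (Finset.prod_ne_zero_iff.mpr ?_))
    intro p _
    simp [phiC]
end

section
/- Let C be an arbitrary set of corner-interval minors of M. Then the toric ideal J_C is a minimal prime ideal of I(C). -/
open MvPolynomial

theorem statement2 (K : Type*) [Field K] (m n : ℕ) [NeZero n]
    (C : Set (Minor2 m n)) (hC : ∀ δ ∈ C, δ.b1 = 0) :
    toricIdeal K C ∈ (minorIdeal K C).minimalPrimes := by
  classical
  have hprime : (toricIdeal K C).IsPrime := RingHom.ker_isPrime _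
  have hX : ∀ p, (X p : MvPolynomial (Fin m × Fin n) K) ∉ toricIdeal K C := by
    intro p hp
    have h : phiC K C (X p) = 0 := hp
    simp only [phiC, aeval_X] at h
    exact mul_ne_zero (X_ne_zero _) (X_ne_zero _) h
  refine ⟨⟨hprime, ?_⟩, ?_⟩
  · unfold minorIdeal
    rw [Ideal.span_le]
    rintro f ⟨δ, hδ, rfl⟩
    change phiC K C (Minor2.binom K δ) = 0
    have h1 : hClass C (δ.a1, δ.b1) = hClass C (δ.a1, δ.b2) := Quot.sound ⟨δ, hδ, Or.inl rfl⟩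
    have h2 : hClass C (δ.a2, δ.b1) = hClass C (δ.a2, δ.b2) := Quot.sound ⟨δ, hδ, Or.inr rfl⟩
    have h3 : vClass C (δ.a1, δ.b1) = vClass C (δ.a2, δ.b1) := Quot.sound ⟨δ, hδ, Or.inl rfl⟩
    have h4 : vClass C (δ.a1, δ.b2) = vClass C (δ.a2, δ.b2) := Quot.sound ⟨δ, hδ, Or.inr rfl⟩
    simp only [Minor2.binom, phiC, map_sub, map_mul, aeval_X, h1, h2, h3, h4]
    ring
  · rintro Q ⟨hQ, hIQ⟩ hQJ f hf
    let A := MvPolynomial (Fin m × Fin n) K ⧸ Q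
    let F := FractionRing A
    let π : MvPolynomial (Fin m × Fin n) K →ₐ[K] F :=
      (IsScalarTower.toAlgHom K A F).comp (Ideal.Quotient.mkₐ K Q)
    have hπ : ∀ g, π g = 0 ↔ g ∈ Q := by
      intro g
      have : π g = algebraMap A F (Ideal.Quotient.mk Q g) := rfl
      rw [this, FaithfulSMul.algebraMap_eq_zero_iff, Ideal.Quotient.eq_zero_iff_mem]
    have hne : ∀ p, π (X p) ≠ 0 := fun p h => hX p (hQJ ((hπ _).1 h))
    have hrel : ∀ δ ∈ C, π (X (δ.a1, δ.b1)) * π (X (δ.a2, δ.b2))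
        = π (X (δ.a1, δ.b2)) * π (X (δ.a2, δ.b1)) := by
      intro δ hδ
      have : π (Minor2.binom K δ) = 0 := (hπ _).2 (hIQ (Ideal.subset_span ⟨δ, hδ, rfl⟩))
      simpa only [Minor2.binom, map_sub, map_mul, sub_eq_zero] using this
    let hh : Quot (horizAdj C) → F := Quot.lift (fun p => π (X (p.1, 0))) (by
      rintro p q ⟨δ, hδ, h | h⟩ <;>
      · rcases Set.pair_eq_pair_iff.1 h with ⟨rfl, rfl⟩ | ⟨rfl, rfl⟩ <;> rfl)
    let vv : Quot (vertAdj C) → F := Quot.lift (fun p => π (X p) / π (X (p.1, 0))) (by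
      rintro p q ⟨δ, hδ, h⟩
      have hb := hC δ hδ
      have hr := hrel δ hδ
      rw [hb] at hr
      have e1 : π (X (δ.a1, δ.b1)) / π (X (δ.a1, 0))
          = π (X (δ.a2, δ.b1)) / π (X (δ.a2, 0)) := by
        rw [hb, div_self (hne _), div_self (hne _)]
      have e2 : π (X (δ.a1, δ.b2)) / π (X (δ.a1, 0))
          = π (X (δ.a2, δ.b2)) / π (X (δ.a2, 0)) := by
        rw [div_eq_div_iff (hne _) (hne _), ← hr, mul_comm]
      rcases h with h | h
      · rcases Set.pair_eq_pair_iff.1 h with ⟨rfl, rfl⟩ | ⟨rfl, rfl⟩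
        · exact e1
        · exact e1.symm
      · rcases Set.pair_eq_pair_iff.1 h with ⟨rfl, rfl⟩ | ⟨rfl, rfl⟩
        · exact e2
        · exact e2.symm)
    let ψ : MvPolynomial (Quot (horizAdj C) ⊕ Quot (vertAdj C)) K →ₐ[K] F :=
      aeval (Sum.elim hh vv)
    have hcomp : ψ.comp (phiC K C) = π := by
      apply MvPolynomial.algHom_ext
      intro p
      simp only [AlgHom.comp_apply, phiC, aeval_X, map_mul, ψ, Sum.elim_inl, Sum.elim_inr]
      change π (X (p.1, 0)) * (π (X p) / π (X (p.1, 0))) = π (X p)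
      exact mul_div_cancel₀ _ (hne _)
    have hf0 : phiC K C f = 0 := hf
    rw [← hπ, ← hcomp, AlgHom.comp_apply, hf0, map_zero]
end

section
/- Let C be an arbitrary set of corner-interval minors of M. Then I(C) is a prime ideal if and only if I(C) = J_C. -/
open MvPolynomial

theorem minorIdeal_le_toric (K : Type*) [Field K] {m n : ℕ} (C : Set (Minor2 m n)) :
    minorIdeal K C ≤ toricIdeal K C := by
  refine Ideal.span_le.2 ?_
  rintro f ⟨δ, hδ, rfl⟩
  have h1 : hClass C (δ.a1, δ.b1) = hClass C (δ.a1, δ.b2) := Quot.sound ⟨δ, hδ, Or.inl rfl⟩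
  have h2 : hClass C (δ.a2, δ.b1) = hClass C (δ.a2, δ.b2) := Quot.sound ⟨δ, hδ, Or.inr rfl⟩
  have h3 : vClass C (δ.a1, δ.b1) = vClass C (δ.a2, δ.b1) := Quot.sound ⟨δ, hδ, Or.inl rfl⟩
  have h4 : vClass C (δ.a1, δ.b2) = vClass C (δ.a2, δ.b2) := Quot.sound ⟨δ, hδ, Or.inr rfl⟩
  simp only [SetLike.mem_coe, toricIdeal, RingHom.mem_ker, Minor2.binom, phiC, map_sub, map_mul,
    aeval_X, h1, h2, h3, h4]
  ring

theorem toric_isPrime (K : Type*) [Field K] {m n : ℕ} (C : Set (Minor2 m n)) :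
    (toricIdeal K C).IsPrime :=
  RingHom.ker_isPrime _

theorem X_notMem_toric (K : Type*) [Field K] {m n : ℕ} (C : Set (Minor2 m n))
    (p : Fin m × Fin n) : X p ∉ toricIdeal K C := by
  simp [toricIdeal, RingHom.mem_ker, phiC, X_ne_zero]

/-- A two-element set in which `p` and `q` occur: invariance of a function along an edge. -/
theorem edge_invariant {α β : Type*} {p q c d : α} (g : α → β)
    (h : ({p, q} : Set α) = {c, d}) (hcd : g c = g d) : g p = g q := by
  have hp : p ∈ ({c, d} : Set α) := h ▸ (by simp)
  have hq : q ∈ ({c, d} : Set α) := h ▸ (by simp)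
  rcases hp with rfl | rfl <;> rcases hq with rfl | rfl <;> simp [hcd]

theorem toric_le_minorIdeal (K : Type*) [Field K] (m n : ℕ) [NeZero n]
    (C : Set (Minor2 m n)) (hC : ∀ δ ∈ C, δ.b1 = 0) (hP : (minorIdeal K C).IsPrime) :
    toricIdeal K C ≤ minorIdeal K C := by
  let A := MvPolynomial (Fin m × Fin n) K ⧸ minorIdeal K C
  let F := FractionRing A
  let π : MvPolynomial (Fin m × Fin n) K →ₐ[K] F :=
    (IsScalarTower.toAlgHom K A F).comp (Ideal.Quotient.mkₐ K (minorIdeal K C))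
  have hπ : ∀ f, π f = 0 ↔ f ∈ minorIdeal K C := by
    intro f
    have : π f = algebraMap A F (Ideal.Quotient.mk _ f) := rfl
    rw [this, FaithfulSMul.algebraMap_eq_zero_iff, Ideal.Quotient.eq_zero_iff_mem]
  have hX : ∀ p, π (X p) ≠ 0 := fun p h =>
    X_notMem_toric K C p (minorIdeal_le_toric K C ((hπ _).1 h))
  have hrel : ∀ δ ∈ C, π (X (δ.a1, δ.b1)) * π (X (δ.a2, δ.b2)) =
      π (X (δ.a1, δ.b2)) * π (X (δ.a2, δ.b1)) := by
    intro δ hδ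
    have := (hπ (Minor2.binom K δ)).2 (Ideal.subset_span ⟨δ, hδ, rfl⟩)
    simpa [Minor2.binom, sub_eq_zero] using this
  let gh : Fin m × Fin n → F := fun p => π (X (p.1, 0))
  let gv : Fin m × Fin n → F := fun p => π (X p) / π (X (p.1, 0))
  have hh : ∀ p q, horizAdj C p q → gh p = gh q := by
    rintro p q ⟨δ, -, h | h⟩ <;> exact edge_invariant gh h rfl
  have hv : ∀ p q, vertAdj C p q → gv p = gv q := by
    rintro p q ⟨δ, hδ, h | h⟩
    · refine edge_invariant gv h ?_
      simp only [gv, hC δ hδ, div_self (hX _)]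
    · refine edge_invariant gv h ?_
      have := hrel δ hδ
      rw [hC δ hδ] at this
      simp only [gv]
      rw [div_eq_div_iff (hX _) (hX _), ← this, mul_comm]
  let ψ : MvPolynomial (Quot (horizAdj C) ⊕ Quot (vertAdj C)) K →ₐ[K] F :=
    aeval (Sum.elim (Quot.lift gh hh) (Quot.lift gv hv))
  have hcomp : ψ.comp (phiC K C) = π := by
    refine MvPolynomial.algHom_ext fun p => ?_
    simp only [AlgHom.comp_apply, phiC, aeval_X, map_mul, ψ, Sum.elim_inl, Sum.elim_inr, hClass,
      vClass, gh, gv]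
    exact mul_div_cancel₀ _ (hX _)
  intro f hf
  rw [← hπ, ← hcomp, AlgHom.comp_apply]
  have : phiC K C f = 0 := hf
  rw [this, map_zero]

theorem statement3 (K : Type*) [Field K] (m n : ℕ) [NeZero n]
    (C : Set (Minor2 m n)) (hC : ∀ δ ∈ C, δ.b1 = 0) :
    (minorIdeal K C).IsPrime ↔ minorIdeal K C = toricIdeal K C := by
  constructor
  · intro hP
    exact le_antisymm (minorIdeal_le_toric K C) (toric_le_minorIdeal K m n C hC hP)
  · intro h
    rw [h]
    exact toric_isPrime K C
end

section
/- Let C be an arbitrary set of corner-interval minors of M, let P be a prime ideal of S_C containing I(C), and let W = {x_{ij} ∈ V(C) : x_{ij} ∈ P}. Then W is an admissible set; that is, for every δ ∈ C, either W ∩ V(δ) = ∅ or W contains an edge of δ. -/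
open MvPolynomial

theorem statement4 (K : Type*) [Field K] (m n : ℕ) [NeZero n]
    (C : Set (Minor2 m n)) (hC : ∀ δ ∈ C, δ.b1 = 0)
    (P : Ideal (MvPolynomial (Fin m × Fin n) K)) (hP : P.IsPrime)
    (hIP : minorIdeal K C ≤ P) :
    Admissible C {p | p ∈ vertexSetOf C ∧ (X p : MvPolynomial (Fin m × Fin n) K) ∈ P} := by
  refine ⟨fun p hp => hp.1, fun δ hδ => ?_⟩
  have hf : X (δ.a1, δ.b1) * X (δ.a2, δ.b2) - X (δ.a1, δ.b2) * X (δ.a2, δ.b1) ∈ P :=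
    hIP (Ideal.subset_span ⟨δ, hδ, rfl⟩)
  have hV : ∀ p ∈ δ.vertexSet, p ∈ vertexSetOf C := fun p hp =>
    Set.mem_biUnion hδ hp
  have v11 := hV (δ.a1, δ.b1) (by simp [Minor2.vertexSet])
  have v12 := hV (δ.a1, δ.b2) (by simp [Minor2.vertexSet])
  have v21 := hV (δ.a2, δ.b1) (by simp [Minor2.vertexSet])
  have v22 := hV (δ.a2, δ.b2) (by simp [Minor2.vertexSet])
  have key : ((X (δ.a1, δ.b1) : MvPolynomial (Fin m × Fin n) K) ∈ P ∨
        (X (δ.a2, δ.b2) : MvPolynomial (Fin m × Fin n) K) ∈ P) ↔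
      ((X (δ.a1, δ.b2) : MvPolynomial (Fin m × Fin n) K) ∈ P ∨
        (X (δ.a2, δ.b1) : MvPolynomial (Fin m × Fin n) K) ∈ P) := by
    rw [← hP.mul_mem_iff_mem_or_mem, ← hP.mul_mem_iff_mem_or_mem]
    constructor
    · intro h
      exact (Submodule.sub_mem_iff_right P h).1 hf
    · intro h
      exact (Submodule.sub_mem_iff_left P h).1 hf
  by_cases h : (X (δ.a1, δ.b1) : MvPolynomial (Fin m × Fin n) K) ∈ P ∨
        (X (δ.a2, δ.b2) : MvPolynomial (Fin m × Fin n) K) ∈ P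
  · right
    obtain ⟨h1 | h1, h2 | h2⟩ := And.intro h (key.1 h)
    · exact ⟨_, _, ⟨v11, h1⟩, ⟨v12, h2⟩, Or.inr (Or.inl rfl)⟩
    · exact ⟨_, _, ⟨v11, h1⟩, ⟨v21, h2⟩, Or.inl (Or.inl rfl)⟩
    · exact ⟨_, _, ⟨v12, h2⟩, ⟨v22, h1⟩, Or.inl (Or.inr rfl)⟩
    · exact ⟨_, _, ⟨v21, h2⟩, ⟨v22, h1⟩, Or.inr (Or.inr rfl)⟩
  · left
    have h' := fun h2 => h (key.2 h2)
    push Not at h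
    rw [Set.eq_empty_iff_forall_notMem]
    rintro p ⟨⟨_, hp⟩, hp' | hp' | hp' | hp'⟩
    · exact h.1 (hp' ▸ hp)
    · exact h' (Or.inl (hp' ▸ hp))
    · exact h' (Or.inr (hp' ▸ hp))
    · exact h.2 (hp' ▸ hp)
end

section
/- Let C be an arbitrary set of corner-interval minors of M, let W and V be two admissible sets of C, and let P_W(C) = (W) + J_{C'} and P_V(C) = (V) + J_{C''} be the corresponding prime ideals, where C' = {δ ∈ C : V(δ) ∩ W = ∅} and C'' = {δ ∈ C : V(δ) ∩ V = ∅}. Then P_W(C) ⊆ P_V(C) if and only if W ⊆ V and for every cycle σ : h_{i₁}, v_{j₁}, h_{i₂}, v_{j₂}, …, h_{i_r}, v_{j_r} of G(C') (r ≥ 2) whose binomial f_σ lies in J_{C'} ∖ J_{C''}, there exist indices k and l (with indices taken modulo r, so i_{r+1} = i₁) such that the vertices x_{a_{i_k} b_{j_k}} and x_{a_{i_{l+1}} b_{j_l}} belong to V. -/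
open MvPolynomial

section Helpers

variable {m n : ℕ}

theorem vertEdge_mem (δ : Minor2 m n) {p q : Fin m × Fin n} (h : δ.VertEdge p q) :
    p ∈ δ.vertexSet ∧ q ∈ δ.vertexSet ∧ p.2 = q.2 := by
  have hp : p ∈ ({p, q} : Set (Fin m × Fin n)) := by simp
  have hq : q ∈ ({p, q} : Set (Fin m × Fin n)) := by simp
  rcases h with h | h <;> rw [h] at hp hq <;>
    rcases hp with hp | hp <;> rcases hq with hq | hq <;>
    subst hp <;> subst hq <;> simp [Minor2.vertexSet]

theorem horizEdge_mem (δ : Minor2 m n) {p q : Fin m × Fin n} (h : δ.HorizEdge p q) :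
    p ∈ δ.vertexSet ∧ q ∈ δ.vertexSet ∧ p.1 = q.1 := by
  have hp : p ∈ ({p, q} : Set (Fin m × Fin n)) := by simp
  have hq : q ∈ ({p, q} : Set (Fin m × Fin n)) := by simp
  rcases h with h | h <;> rw [h] at hp hq <;>
    rcases hp with hp | hp <;> rcases hq with hq | hq <;>
    subst hp <;> subst hq <;> simp [Minor2.vertexSet]

theorem vClass_eq {C : Set (Minor2 m n)} {p q : Fin m × Fin n} (h : vClass C p = vClass C q) :
    p.2 = q.2 ∧ (p = q ∨ (p ∈ vertexSetOf C ∧ q ∈ vertexSetOf C)) := by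
  have h' := Quot.eqvGen_exact h
  induction h' with
  | rel x y hxy =>
    obtain ⟨δ, hδ, he⟩ := hxy
    obtain ⟨h1, h2, h3⟩ := vertEdge_mem δ he
    exact ⟨h3, Or.inr ⟨Set.mem_biUnion hδ h1, Set.mem_biUnion hδ h2⟩⟩
  | refl x => exact ⟨rfl, Or.inl rfl⟩
  | symm x y _ ih =>
    obtain ⟨h1, h2⟩ := ih h.symm
    exact ⟨h1.symm, h2.elim (fun h => Or.inl h.symm) fun h => Or.inr h.symm⟩
  | trans x y z hxy hyz ih1 ih2 =>
    obtain ⟨h1, h2⟩ := ih1 (Quot.eqvGen_sound hxy)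
    obtain ⟨h3, h4⟩ := ih2 (Quot.eqvGen_sound hyz)
    refine ⟨h1.trans h3, ?_⟩
    rcases h2 with rfl | h2
    · exact h4
    · rcases h4 with rfl | h4
      · exact Or.inr h2
      · exact Or.inr ⟨h2.1, h4.2⟩

theorem hClass_eq {C : Set (Minor2 m n)} {p q : Fin m × Fin n} (h : hClass C p = hClass C q) :
    p.1 = q.1 ∧ (p = q ∨ (p ∈ vertexSetOf C ∧ q ∈ vertexSetOf C)) := by
  have h' := Quot.eqvGen_exact h
  induction h' with
  | rel x y hxy =>
    obtain ⟨δ, hδ, he⟩ := hxy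
    obtain ⟨h1, h2, h3⟩ := horizEdge_mem δ he
    exact ⟨h3, Or.inr ⟨Set.mem_biUnion hδ h1, Set.mem_biUnion hδ h2⟩⟩
  | refl x => exact ⟨rfl, Or.inl rfl⟩
  | symm x y _ ih =>
    obtain ⟨h1, h2⟩ := ih h.symm
    exact ⟨h1.symm, h2.elim (fun h => Or.inl h.symm) fun h => Or.inr h.symm⟩
  | trans x y z hxy hyz ih1 ih2 =>
    obtain ⟨h1, h2⟩ := ih1 (Quot.eqvGen_sound hxy)
    obtain ⟨h3, h4⟩ := ih2 (Quot.eqvGen_sound hyz)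
    refine ⟨h1.trans h3, ?_⟩
    rcases h2 with rfl | h2
    · exact h4
    · rcases h4 with rfl | h4
      · exact Or.inr h2
      · exact Or.inr ⟨h2.1, h4.2⟩

/-- Abstract extraction of a closed alternating walk with distinct classes. -/
theorem exists_closed_walk {α H L : Type*} [Finite α] (h : α → H) (v : α → L)
    (s t : Multiset α) (hh : s.map h = t.map h) (hv : s.map v = t.map v) (hs : s ≠ 0) :
    ∃ (r : ℕ) (p q : Fin (r + 1) → α),
      (∀ k, p k ∈ s) ∧ (∀ k, q k ∈ t) ∧ (∀ k, v (p k) = v (q k)) ∧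
      (∀ k, h (q k) = h (p (k + 1))) ∧
      Function.Injective (fun k => h (p k)) ∧ Function.Injective (fun k => v (p k)) := by
  classical
  obtain ⟨x0, hx0⟩ := Multiset.exists_mem_of_ne_zero hs
  have hQ : ∀ c : L, ∃ q, c ∈ s.map v → q ∈ t ∧ v q = c := by
    intro c
    by_cases hc : c ∈ s.map v
    · rw [hv, Multiset.mem_map] at hc
      obtain ⟨q, hq⟩ := hc
      exact ⟨q, fun _ => hq⟩
    · exact ⟨x0, fun hc' => absurd hc' hc⟩
  have hP : ∀ c : H, ∃ q, c ∈ t.map h → q ∈ s ∧ h q = c := by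
    intro c
    by_cases hc : c ∈ t.map h
    · rw [← hh, Multiset.mem_map] at hc
      obtain ⟨q, hq⟩ := hc
      exact ⟨q, fun _ => hq⟩
    · exact ⟨x0, fun hc' => absurd hc' hc⟩
  choose Q hQ using hQ
  choose P hP using hP
  let step : α → α := fun x => P (h (Q (v x)))
  have hQs : ∀ x ∈ s, Q (v x) ∈ t ∧ v (Q (v x)) = v x :=
    fun x hx => hQ _ (Multiset.mem_map_of_mem _ hx)
  have hstep : ∀ x ∈ s, step x ∈ s ∧ h (step x) = h (Q (v x)) :=
    fun x hx => hP _ (Multiset.mem_map_of_mem _ (hQs x hx).1)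
  have hPh : ∀ x ∈ s, P (h (step x)) = step x := by
    intro x hx
    rw [(hstep x hx).2]
  have hit : ∀ i, ∀ x ∈ s, step^[i] x ∈ s := by
    intro i
    induction i with
    | zero => intro x hx; exact hx
    | succ i ih => intro x hx; exact ih _ (hstep x hx).1
  obtain ⟨i, j, hij, hEq⟩ : ∃ i j : ℕ, i < j ∧ step^[i] x0 = step^[j] x0 := by
    obtain ⟨i, j, hne, he⟩ := Finite.exists_ne_map_eq_of_infinite (fun i : ℕ => step^[i] x0)
    rcases lt_or_gt_of_ne hne with hl | hl
    · exact ⟨i, j, hl, he⟩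
    · exact ⟨j, i, hl, he.symm⟩
  set x := step^[i] x0 with hx
  have hxs : x ∈ s := hit i x0 hx0
  have hper : Function.IsPeriodicPt step (j - i) x := by
    show step^[j - i] x = x
    rw [hx, ← Function.iterate_add_apply, Nat.sub_add_cancel hij.le, ← hEq]
  have hpos : 0 < Function.minimalPeriod step x := hper.minimalPeriod_pos (by omega)
  obtain ⟨r, hr⟩ : ∃ r, Function.minimalPeriod step x = r + 1 := ⟨_, (Nat.succ_pred_eq_of_pos hpos).symm⟩
  have hinj := Function.iterate_injOn_Iio_minimalPeriod (f := step) (x := x)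
  have hfull : step^[r + 1] x = x := by
    rw [← hr]; exact Function.isPeriodicPt_minimalPeriod step x
  have hsucc : ∀ k : Fin (r + 1), step^[(k + 1 : Fin (r + 1)).val] x = step (step^[k.val] x) := by
    intro k
    rw [← Function.iterate_succ_apply' step, Fin.val_add]
    rw [← Function.iterate_mod_minimalPeriod_eq (f := step) (n := k.val.succ), hr]
    simp
  have hback : ∀ k : ℕ, step^[k] x = step (step^[k + r] x) := by
    intro k
    rw [← Function.iterate_succ_apply' step, Nat.succ_eq_add_one, add_assoc,
      Function.iterate_add_apply, hfull]
  have hinj' : ∀ k l : Fin (r + 1), step^[k.val] x = step^[l.val] x → k = l := by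
    intro k l hkl
    apply Fin.ext
    refine hinj ?_ ?_ hkl
    · rw [hr]; exact k.2
    · rw [hr]; exact l.2
  refine ⟨r, fun k => step^[k.val] x, fun k => Q (v (step^[k.val] x)), fun k => hit _ _ hxs,
    fun k => (hQs _ (hit _ _ hxs)).1, fun k => (hQs _ (hit _ _ hxs)).2.symm, ?_, ?_, ?_⟩
  · intro k
    show _ = h (step^[(k + 1 : Fin (r + 1)).val] x)
    rw [hsucc]
    exact (hstep _ (hit _ _ hxs)).2.symm
  · intro k l hkl
    apply hinj'
    have hkl' : P (h (step^[k.val] x)) = P (h (step^[l.val] x)) := congrArg P hkl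
    rw [hback k.val, hback l.val, hPh _ (hit _ _ hxs), hPh _ (hit _ _ hxs)] at hkl'
    rw [hback k.val, hback l.val, hkl']
  · intro k l hkl
    have hkl' : step (step^[k.val] x) = step (step^[l.val] x) :=
      congrArg (fun c => P (h (Q c))) hkl
    rw [← hsucc, ← hsucc] at hkl'
    exact add_right_cancel (hinj' _ _ hkl')

theorem prod_sub_prod_mem (K : Type*) [Field K] (C : Set (Minor2 m n))
    (I : Ideal (MvPolynomial (Fin m × Fin n) K))
    (hI : ∀ σ : CycleIn C, cycleBinom K σ ∈ I) (N : ℕ) :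
    ∀ s t : Multiset (Fin m × Fin n), s.card ≤ N →
      s.map (hClass C) = t.map (hClass C) → s.map (vClass C) = t.map (vClass C) →
      (s.map fun p => (X p : MvPolynomial (Fin m × Fin n) K)).prod
        - (t.map fun p => (X p : MvPolynomial (Fin m × Fin n) K)).prod ∈ I := by
  classical
  induction N with
  | zero =>
    intro s t hs hh hv
    have h0 : s = 0 := Multiset.card_eq_zero.1 (Nat.le_zero.1 hs)
    subst h0
    have : t = 0 := by simpa using hh.symm
    subst this
    simp
  | succ N ih =>
    intro s t hs hh hv
    by_cases h0 : s = 0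
    · subst h0
      have : t = 0 := by simpa using hh.symm
      subst this
      simp
    obtain ⟨r, p, q, hp, hq, hpv, hqh, injh, injv⟩ := exists_closed_walk _ _ s t hh hv h0
    have pinj : Function.Injective p := fun k l hkl => injh (congrArg (hClass C) hkl)
    have qinj : Function.Injective q := fun k l hkl => injv (by
      show vClass C (p k) = vClass C (p l)
      rw [hpv, hpv, hkl])
    have hle1 : (Finset.univ : Finset (Fin (r + 1))).val.map p ≤ s := by
      rw [Multiset.le_iff_subset (Finset.univ.nodup.map pinj)]
      intro a ha
      obtain ⟨k, _, rfl⟩ := Multiset.mem_map.1 ha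
      exact hp k
    have hle2 : (Finset.univ : Finset (Fin (r + 1))).val.map q ≤ t := by
      rw [Multiset.le_iff_subset (Finset.univ.nodup.map qinj)]
      intro a ha
      obtain ⟨k, _, rfl⟩ := Multiset.mem_map.1 ha
      exact hq k
    obtain ⟨s', rfl⟩ := Multiset.le_iff_exists_add.1 hle1
    obtain ⟨t', rfl⟩ := Multiset.le_iff_exists_add.1 hle2
    have e1 : ((Finset.univ : Finset (Fin (r + 1))).val.map p).map (vClass C)
        = ((Finset.univ : Finset (Fin (r + 1))).val.map q).map (vClass C) := by
      rw [Multiset.map_map, Multiset.map_map]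
      exact Multiset.map_congr rfl fun k _ => hpv k
    have e2 : ((Finset.univ : Finset (Fin (r + 1))).val.map p).map (hClass C)
        = ((Finset.univ : Finset (Fin (r + 1))).val.map q).map (hClass C) := by
      rw [Multiset.map_map, Multiset.map_map]
      have : (Finset.univ : Finset (Fin (r + 1))).val.map (hClass C ∘ q)
          = ((Finset.univ : Finset (Fin (r + 1))).val.map (Equiv.addRight 1)).map
            (hClass C ∘ p) := by
        rw [Multiset.map_map]
        exact Multiset.map_congr rfl fun k _ => hqh k
      rw [this, Multiset.map_univ_val_equiv]
    have hh' : s'.map (hClass C) = t'.map (hClass C) := by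
      rw [Multiset.map_add, Multiset.map_add, e2] at hh
      exact add_left_cancel hh
    have hv' : s'.map (vClass C) = t'.map (vClass C) := by
      rw [Multiset.map_add, Multiset.map_add, e1] at hv
      exact add_left_cancel hv
    have hcard : s'.card ≤ N := by
      simp at hs
      omega
    have key := ih s' t' hcard hh' hv'
    have hcyc : (∏ k, X (p k) : MvPolynomial (Fin m × Fin n) K) - ∏ k, X (q k) ∈ I := by
      rcases r with _ | r
      · have hpq : p 0 = q 0 := by
          have h1 := (vClass_eq (hpv 0)).1
          have h2 := (hClass_eq (hqh 0)).1
          exact Prod.ext (by simpa using h2.symm) h1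
        simp [hpq]
      · have hne : ∀ k, hClass C (p k) ≠ hClass C (p (k + 1)) := fun k hk => by
          have := injh hk
          simp at this
        have hne' : ∀ k, p k ≠ q k := fun k hk => hne k (by rw [← hqh, hk])
        exact hI
          { len := r
            p := p
            q := q
            p_mem := fun k => ((vClass_eq (hpv k)).2.resolve_left (hne' k)).1
            q_mem := fun k => ((vClass_eq (hpv k)).2.resolve_left (hne' k)).2
            shareV := hpv
            shareH := hqh
            injH := injh
            injV := injv }
    rw [Multiset.map_add, Multiset.map_add, Multiset.prod_add, Multiset.prod_add,
      Multiset.map_map, Multiset.map_map]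
    have hfin := I.add_mem (I.mul_mem_right
      (s'.map fun p => (X p : MvPolynomial (Fin m × Fin n) K)).prod hcyc)
      (I.mul_mem_left (∏ k, X (q k)) key)
    convert hfin using 1
    simp only [Finset.prod, Function.comp_def]
    ring

theorem filterMap_none_eq {α β : Type*} (s : Multiset α) :
    s.filterMap (fun _ => (none : Option β)) = 0 := by
  induction s using Multiset.induction_on with
  | empty => rfl
  | cons a s ih => rw [Multiset.filterMap_cons_none _ _ rfl, ih]

theorem filterMap_some_comp {α β : Type*} (f : α → β) (s : Multiset α) :
    s.filterMap (fun x => some (f x)) = s.map f := by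
  induction s using Multiset.induction_on with
  | empty => rfl
  | cons a s ih => rw [Multiset.filterMap_cons_some (fun x => some (f x)) a s (b := f a) rfl, ih, Multiset.map_cons]

/-- The kernel of a monomial map lies in every ideal containing its binomials. -/
theorem toricIdeal_le (K : Type*) [Field K] (C : Set (Minor2 m n))
    (I : Ideal (MvPolynomial (Fin m × Fin n) K))
    (hI : ∀ σ : CycleIn C, cycleBinom K σ ∈ I) : toricIdeal K C ≤ I := by
  classical
  let A : (Fin m × Fin n →₀ ℕ) → (Quot (horizAdj C) ⊕ Quot (vertAdj C) →₀ ℕ) := fun u =>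
    u.mapDomain (fun p => Sum.inl (hClass C p)) + u.mapDomain (fun p => Sum.inr (vClass C p))
  have hmon : ∀ (u : Fin m × Fin n →₀ ℕ),
      (monomial u 1 : MvPolynomial _ K) = ((Finsupp.toMultiset u).map fun p => X p).prod := by
    intro u
    rw [Finsupp.toMultiset_map, Finsupp.prod_toMultiset, monomial_eq, C_1, one_mul,
      Finsupp.prod_mapDomain_index (by simp) (by intros; rw [pow_add])]
  have hA : ∀ u u', A u = A u' → (monomial u 1 : MvPolynomial _ K) - monomial u' 1 ∈ I := by
    intro u u' huu
    have h1 := congrArg Finsupp.toMultiset huu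
    simp only [A, map_add, ← Finsupp.toMultiset_map] at h1
    rw [hmon, hmon]
    refine prod_sub_prod_mem K C I hI _ _ _ le_rfl ?_ ?_
    · have h2 := congrArg (Multiset.filterMap Sum.getLeft?) h1
      simpa [Multiset.filterMap_add, Multiset.filterMap_map, Function.comp_def,
        filterMap_some_comp, filterMap_none_eq] using h2
    · have h2 := congrArg (Multiset.filterMap Sum.getRight?) h1
      simpa [Multiset.filterMap_add, Multiset.filterMap_map, Function.comp_def,
        filterMap_some_comp, filterMap_none_eq] using h2
  have hphi : ∀ u (c : K), phiC K C (monomial u c) = monomial (A u) c := by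
    intro u c
    rw [phiC, aeval_monomial, monomial_eq, Finsupp.prod_add_index' (by simp)
      (by intros; rw [pow_add]),
      Finsupp.prod_mapDomain_index (by simp) (by intros; rw [pow_add]),
      Finsupp.prod_mapDomain_index (by simp) (by intros; rw [pow_add]), ← Finsupp.prod_mul]
    simp only [mul_pow]
    rfl
  have hsec : ∀ w, ∃ u', ∀ u, A u = w → A u' = w := by
    intro w
    by_cases h : ∃ u, A u = w
    · obtain ⟨u, hu⟩ := h
      exact ⟨u, fun _ _ => hu⟩
    · exact ⟨0, fun u hu => absurd ⟨u, hu⟩ h⟩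
  choose sec hsec using hsec
  let L : MvPolynomial (Quot (horizAdj C) ⊕ Quot (vertAdj C)) K →ₗ[K]
      MvPolynomial (Fin m × Fin n) K :=
    (MvPolynomial.basisMonomials _ K).constr K fun w => monomial (sec w) 1
  have hL : ∀ w (c : K), L (monomial w c) = monomial (sec w) c := by
    intro w c
    have h1 : (monomial w c : MvPolynomial (Quot (horizAdj C) ⊕ Quot (vertAdj C)) K)
        = c • (MvPolynomial.basisMonomials _ K) w := by
      simp [smul_monomial]
    rw [h1, map_smul, Module.Basis.constr_basis, smul_monomial, smul_eq_mul, mul_one]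
  have hmain : ∀ f : MvPolynomial (Fin m × Fin n) K, f - L (phiC K C f) ∈ I := by
    intro f
    induction f using MvPolynomial.induction_on' with
    | monomial u c =>
      have := I.mul_mem_left (MvPolynomial.C c) (hA u (sec (A u)) (hsec _ _ rfl).symm)
      rw [mul_sub, C_mul_monomial, C_mul_monomial, mul_one] at this
      rwa [hphi, hL]
    | add f g ihf ihg =>
      rw [map_add, map_add, add_sub_add_comm]
      exact I.add_mem ihf ihg
  intro f hf
  have := hmain f
  rw [(RingHom.mem_ker.1 hf : phiC K C f = 0), map_zero, sub_zero] at this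
  exact this

open Classical in
/-- The map whose kernel contains `P_V(C)`. -/
noncomputable def psiV (K : Type*) [Field K] (D : Set (Minor2 m n)) (V : Set (Fin m × Fin n)) :
    MvPolynomial (Quot (horizAdj D) ⊕ Quot (vertAdj D)) K →ₐ[K]
      MvPolynomial (Quot (horizAdj D) ⊕ Quot (vertAdj D)) K :=
  aeval (Sum.elim (fun h => if ∃ p ∈ V, hClass D p = h then 0 else X (Sum.inl h))
    (fun v => X (Sum.inr v)))

theorem psiV_mem (K : Type*) [Field K] (D : Set (Minor2 m n)) (V : Set (Fin m × Fin n))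
    {p : Fin m × Fin n} (hp : p ∈ V) : psiV K D V (phiC K D (X p)) = 0 := by
  have : ∃ p' ∈ V, hClass D p' = hClass D p := ⟨p, hp, rfl⟩
  simp [psiV, phiC, this]

theorem psiV_not_mem (K : Type*) [Field K] (C : Set (Minor2 m n)) (V : Set (Fin m × Fin n))
    {p : Fin m × Fin n} (hp : p ∉ V) :
    psiV K (minorsAvoiding C V) V (phiC K (minorsAvoiding C V) (X p))
      = phiC K (minorsAvoiding C V) (X p) := by
  have : ¬ ∃ p' ∈ V, hClass (minorsAvoiding C V) p' = hClass (minorsAvoiding C V) p := by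
    rintro ⟨p', hp', he⟩
    rcases (hClass_eq he).2 with rfl | h
    · exact hp hp'
    · obtain ⟨δ, hδ, hm⟩ := Set.mem_iUnion₂.1 h.1
      have : p' ∈ δ.vertexSet ∩ V := ⟨hm, hp'⟩
      rw [hδ.2] at this
      exact this
  simp [psiV, phiC, this]

theorem PW_le (K : Type*) [Field K] (C : Set (Minor2 m n)) (V : Set (Fin m × Fin n))
    {f : MvPolynomial (Fin m × Fin n) K} (hf : f ∈ PW K C V) :
    psiV K (minorsAvoiding C V) V (phiC K (minorsAvoiding C V) f) = 0 := by
  have : PW K C V ≤ RingHom.ker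
      ((psiV K (minorsAvoiding C V) V).comp (phiC K (minorsAvoiding C V))) := by
    refine sup_le ?_ ?_
    · refine Ideal.span_le.2 ?_
      rintro _ ⟨p, hp, rfl⟩
      exact psiV_mem K _ V hp
    · intro g hg
      have hg' : phiC K (minorsAvoiding C V) g = 0 := hg
      rw [RingHom.mem_ker, AlgHom.comp_apply, hg', map_zero]
  exact this hf

theorem phiC_X_ne (K : Type*) [Field K] (D : Set (Minor2 m n)) (p : Fin m × Fin n) :
    phiC K D (X p) ≠ 0 := by
  simp [phiC]

theorem cycleBinom_mem (K : Type*) [Field K] {D : Set (Minor2 m n)} (σ : CycleIn D) :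
    cycleBinom K σ ∈ toricIdeal K D := by
  show phiC K D _ = 0
  simp only [cycleBinom, phiC, map_sub, map_prod, aeval_X, Finset.prod_mul_distrib, σ.shareV,
    σ.shareH]
  rw [sub_eq_zero]
  congr 1
  exact (Equiv.prod_comp (Equiv.addRight 1)
    (fun k => (X (Sum.inl (hClass D (σ.p k))) : MvPolynomial _ K))).symm

end Helpers

theorem statement6 (K : Type*) [Field K] (m n : ℕ) [NeZero n]
    (C : Set (Minor2 m n)) (hC : ∀ δ ∈ C, δ.b1 = 0)
    (W V : Set (Fin m × Fin n)) (hW : Admissible C W) (hV : Admissible C V) :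
    PW K C W ≤ PW K C V ↔
      W ⊆ V ∧
        ∀ σ : CycleIn (minorsAvoiding C W),
          cycleBinom K σ ∈ toricIdeal K (minorsAvoiding C W) →
          cycleBinom K σ ∉ toricIdeal K (minorsAvoiding C V) →
          ∃ k l, σ.p k ∈ V ∧ σ.q l ∈ V := by
  constructor
  · intro hle
    have hWV : W ⊆ V := by
      intro p hp
      by_contra hpV
      have h1 : (X p : MvPolynomial (Fin m × Fin n) K) ∈ PW K C W :=
        Ideal.mem_sup_left (Ideal.subset_span ⟨p, hp, rfl⟩)
      have h2 := PW_le K C V (hle h1)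
      rw [psiV_not_mem K C V hpV] at h2
      exact phiC_X_ne K _ p h2
    refine ⟨hWV, fun σ hσ hσ' => ?_⟩
    have h2 := PW_le K C V (hle (Ideal.mem_sup_right hσ))
    have hzero : ∀ g : Fin (σ.len + 2) → Fin m × Fin n, (∃ k, g k ∈ V) →
        psiV K (minorsAvoiding C V) V (phiC K (minorsAvoiding C V) (∏ k, X (g k))) = 0 := by
      rintro g ⟨k, hk⟩
      rw [map_prod, map_prod]
      exact Finset.prod_eq_zero (Finset.mem_univ k) (psiV_mem K _ V hk)
    have hsame : ∀ g : Fin (σ.len + 2) → Fin m × Fin n, (¬ ∃ k, g k ∈ V) →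
        psiV K (minorsAvoiding C V) V (phiC K (minorsAvoiding C V) (∏ k, X (g k)))
          = phiC K (minorsAvoiding C V) (∏ k, X (g k)) := by
      intro g hg
      rw [map_prod, map_prod]
      exact Finset.prod_congr rfl fun k _ => psiV_not_mem K C V fun h => hg ⟨k, h⟩
    have hne : ∀ g : Fin (σ.len + 2) → Fin m × Fin n,
        phiC K (minorsAvoiding C V) (∏ k, X (g k)) ≠ 0 := by
      intro g
      rw [map_prod]
      exact Finset.prod_ne_zero_iff.2 fun k _ => phiC_X_ne K _ _
    rw [cycleBinom, map_sub, map_sub] at h2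
    by_cases hp : ∃ k, σ.p k ∈ V <;> by_cases hq : ∃ k, σ.q k ∈ V
    · obtain ⟨k, hk⟩ := hp
      obtain ⟨l, hl⟩ := hq
      exact ⟨k, l, hk, hl⟩
    · rw [hzero _ hp, hsame _ hq, zero_sub, neg_eq_zero] at h2
      exact absurd h2 (hne _)
    · rw [hsame _ hp, hzero _ hq, sub_zero] at h2
      exact absurd h2 (hne _)
    · rw [hsame _ hp, hsame _ hq, ← map_sub] at h2
      exact absurd h2 hσ'
  · rintro ⟨hWV, hcyc⟩
    refine sup_le ?_ ?_
    · exact (Ideal.span_mono (Set.image_mono hWV)).trans le_sup_left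
    · refine toricIdeal_le K _ _ fun σ => ?_
      by_cases hσ : cycleBinom K σ ∈ toricIdeal K (minorsAvoiding C V)
      · exact Ideal.mem_sup_right hσ
      · obtain ⟨k, l, hk, hl⟩ := hcyc σ (cycleBinom_mem K σ) hσ
        have hmem : ∀ (g : Fin (σ.len + 2) → Fin m × Fin n) (k), g k ∈ V →
            (∏ k, X (g k) : MvPolynomial (Fin m × Fin n) K) ∈ varIdeal K V := by
          intro g k hk
          exact Ideal.mem_of_dvd _ (Finset.dvd_prod_of_mem _ (Finset.mem_univ k))
            (Ideal.subset_span ⟨g k, hk, rfl⟩)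
        exact Ideal.mem_sup_left (Ideal.sub_mem _ (hmem _ k hk) (hmem _ l hl))
end

section
/- Let C be an arbitrary set of corner-interval minors of M and let V be an admissible set of C with corresponding prime ideal P_V(C) = (V) + J_{C''}, where C'' = {δ ∈ C : V(δ) ∩ V = ∅}. Then P_V(C) is a minimal prime of I(C) if and only if for every admissible set W properly contained in V, with C' = {δ ∈ C : V(δ) ∩ W = ∅}, there exists a cycle σ : h_{i₁}, v_{j₁}, h_{i₂}, v_{j₂}, …, h_{i_r}, v_{j_r} of G(C') (r ≥ 2, indices modulo r so i_{r+1} = i₁) with f_σ ∈ J_{C'} ∖ J_{C''} such that either x_{a_{i_k} b_{j_k}} ∉ V for all 1 ≤ k ≤ r, or x_{a_{i_{l+1}} b_{j_l}} ∉ V for all 1 ≤ l ≤ r. -/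
open MvPolynomial

/-! ### Abstract combinatorics: alternating cycles in multisets -/

theorem s7_exists_cycle {P A B : Type*} (h : P → A) (v : P → B)
    (hinj : ∀ x y, h x = h y → v x = v y → x = y) (s t : Multiset P) (hs : s ≠ 0)
    (hdisj : ∀ x ∈ s, x ∉ t) (hh : s.map h = t.map h) (hv : s.map v = t.map v) :
    ∃ (len : ℕ) (p q : Fin (len + 2) → P), (∀ k, p k ∈ s) ∧ (∀ k, q k ∈ t) ∧
      (∀ k, v (p k) = v (q k)) ∧ (∀ k, h (q k) = h (p (k + 1))) ∧
      (Function.Injective fun k => h (p k)) ∧ (Function.Injective fun k => v (p k)) := by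
  classical
  obtain ⟨x0, hx0⟩ := Multiset.exists_mem_of_ne_zero hs
  have hq : ∀ b : {b // b ∈ s.map v}, ∃ q ∈ t, v q = b.1 := by
    rintro ⟨b, hb⟩
    rw [hv] at hb
    simpa using hb
  have hp : ∀ a : {a // a ∈ s.map h}, ∃ p ∈ s, h p = a.1 := by
    rintro ⟨a, ha⟩
    simpa using ha
  choose Q hQt hQv using hq
  choose Pf hPs hPh using hp
  let vp : {a // a ∈ s.map h} → {b // b ∈ s.map v} := fun a =>
    ⟨v (Pf a), Multiset.mem_map_of_mem v (hPs a)⟩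
  let nx : {a // a ∈ s.map h} → {a // a ∈ s.map h} := fun a =>
    ⟨h (Q (vp a)), by rw [hh]; exact Multiset.mem_map_of_mem h (hQt _)⟩
  have hfin : Finite {a // a ∈ s.map h} := by
    have : {a | a ∈ s.map h}.Finite := (s.map h).finite_toSet
    exact this
  let a0 : {a // a ∈ s.map h} := ⟨h x0, Multiset.mem_map_of_mem h hx0⟩
  obtain ⟨i, j, hij, hne⟩ := Finite.exists_ne_map_eq_of_infinite (fun k : ℕ => nx^[k] a0)
  have hper : ∃ y, 0 < Function.minimalPeriod nx y := by
    have key : ∀ i j : ℕ, i < j → nx^[i] a0 = nx^[j] a0 →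
        ∃ y, 0 < Function.minimalPeriod nx y := by
      intro i j hlt he
      refine ⟨nx^[i] a0, ?_⟩
      have : Function.IsPeriodicPt nx (j - i) (nx^[i] a0) := by
        unfold Function.IsPeriodicPt Function.IsFixedPt
        rw [← Function.iterate_add_apply, Nat.sub_add_cancel hlt.le, he]
      exact this.minimalPeriod_pos (by omega)
    rcases lt_or_gt_of_ne hij with hlt | hlt
    · exact key i j hlt hne
    · exact key j i hlt hne.symm
  obtain ⟨y, hy⟩ := hper
  have hr : 2 ≤ Function.minimalPeriod nx y := by
    by_contra hcon
    have h1 : Function.minimalPeriod nx y = 1 := by omega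
    have h2 : nx y = y := by
      have := Function.iterate_minimalPeriod (f := nx) (x := y)
      rwa [h1] at this
    have h3 : Q (vp y) = Pf y := by
      apply hinj
      · rw [hPh y]
        exact congrArg Subtype.val h2
      · rw [hQv]
    exact hdisj _ (hPs y) (h3 ▸ hQt (vp y))
  obtain ⟨len, hlen⟩ := Nat.exists_eq_add_of_le hr
  have hlen' : Function.minimalPeriod nx y = len + 2 := by omega
  have hinjit : Function.Injective fun k : Fin (len + 2) => nx^[k.1] y := by
    intro k l hkl
    have := Function.iterate_injOn_Iio_minimalPeriod (f := nx) (x := y)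
      (by rw [hlen']; exact k.2 : k.1 ∈ Set.Iio _) (by rw [hlen']; exact l.2 : l.1 ∈ Set.Iio _) hkl
    exact Fin.ext this
  have hstep : ∀ k : Fin (len + 2), nx (nx^[k.1] y) = nx^[(k + 1 : Fin (len + 2)).1] y := by
    intro k
    rw [← Function.iterate_succ_apply' nx k.1 y, Fin.val_add_one]
    split_ifs with hk
    · rw [hk]
      have := Function.iterate_minimalPeriod (f := nx) (x := y)
      rw [hlen'] at this
      simpa using this
    · rfl
  refine ⟨len, fun k => Pf (nx^[k.1] y), fun k => Q (vp (nx^[k.1] y)), fun k => hPs _,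
    fun k => hQt _, fun k => (hQv (vp (nx^[k.1] y))).symm, fun k => ?_, ?_, ?_⟩
  · have := congrArg Subtype.val (hstep k)
    rw [hPh]
    exact this
  · intro k l hkl
    simp only [hPh] at hkl
    exact hinjit (Subtype.ext hkl)
  · intro k l hkl
    have h1 : vp (nx^[k.1] y) = vp (nx^[l.1] y) := Subtype.ext hkl
    have h2 : nx (nx^[k.1] y) = nx (nx^[l.1] y) := by
      apply Subtype.ext
      change h (Q (vp _)) = h (Q (vp _))
      rw [h1]
    rw [hstep, hstep] at h2
    exact add_right_cancel (hinjit h2)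

/-- Binomials of multisets with equal images lie in any ideal containing alternating
cycle binomials. -/
theorem s7_binom_mem {P A B K : Type*} [Field K] (h : P → A) (v : P → B)
    (hinj : ∀ x y, h x = h y → v x = v y → x = y) (I : Ideal (MvPolynomial P K))
    (hI : ∀ (len : ℕ) (p q : Fin (len + 2) → P), (∀ k l, p k ≠ q l) →
      (∀ k, v (p k) = v (q k)) → (∀ k, h (q k) = h (p (k + 1))) →
      (Function.Injective fun k => h (p k)) → (Function.Injective fun k => v (p k)) →
      (∏ k, (X (p k) : MvPolynomial P K)) - ∏ k, X (q k) ∈ I) :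
    ∀ (N : ℕ) (s t : Multiset P), s.card = N → s.map h = t.map h → s.map v = t.map v →
      (s.map (fun x => (X x : MvPolynomial P K))).prod - (t.map (fun x => X x)).prod ∈ I := by
  classical
  -- common factor
  intro N
  induction N with
  | zero =>
    intro s t hs hh hv
    have hs0 : s = 0 := Multiset.card_eq_zero.mp hs
    subst hs0
    have ht0 : t = 0 := by
      have := hh.symm
      simpa using this
    subst ht0
    simp
  | succ N ih =>
    have common : ∀ (s t : Multiset P) (x : P), s.card = N + 1 → x ∈ s → x ∈ t →
        s.map h = t.map h → s.map v = t.map v →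
        (s.map (fun x => (X x : MvPolynomial P K))).prod - (t.map (fun x => X x)).prod ∈ I := by
      intro s t x hc hxs hxt hh hv
      obtain ⟨s', rfl⟩ := Multiset.exists_cons_of_mem hxs
      obtain ⟨t', rfl⟩ := Multiset.exists_cons_of_mem hxt
      simp only [Multiset.map_cons, Multiset.prod_cons, Multiset.cons_inj_right,
        Multiset.card_cons, add_left_inj] at *
      rw [← mul_sub]
      exact I.mul_mem_left _ (ih s' t' hc hh hv)
    intro s t hs hh hv
    by_cases hdisj : ∀ x ∈ s, x ∉ t
    · have hs0 : s ≠ 0 := by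
        rintro rfl
        simp at hs
      obtain ⟨len, p, q, hp, hq, hpq, hqp, injH, injV⟩ :=
        s7_exists_cycle h v hinj s t hs0 hdisj hh hv
      have hne : ∀ k l, p k ≠ q l := fun k l he => hdisj _ (hp k) (he ▸ hq l)
      have hcyc := hI len p q hne hpq hqp injH injV
      have hpinj : Function.Injective p := fun a b hab => injH (congrArg h hab)
      let a : Multiset P := (Finset.univ : Finset (Fin (len + 2))).val.map p
      let b : Multiset P := (Finset.univ : Finset (Fin (len + 2))).val.map q
      have hle : a ≤ s := by
        rw [Multiset.le_iff_subset (Multiset.Nodup.map hpinj Finset.univ.nodup)]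
        intro x hx
        obtain ⟨k, -, rfl⟩ := Multiset.mem_map.mp hx
        exact hp k
      obtain ⟨u, rfl⟩ := Multiset.le_iff_exists_add.mp hle
      have hav : a.map v = b.map v := by
        simp only [a, b, Multiset.map_map]
        exact Multiset.map_congr rfl (fun k _ => hpq k)
      have hah : a.map h = b.map h := by
        have e1 : b.map h = ((Finset.univ : Finset (Fin (len + 2))).val.map
            (fun k => k + 1)).map (h ∘ p) := by
          simp only [b, Multiset.map_map]
          exact Multiset.map_congr rfl (fun k _ => hqp k)
        have e2 : ((Finset.univ : Finset (Fin (len + 2))).val.map (fun k => k + 1))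
            = (Finset.univ : Finset (Fin (len + 2))).val :=
          Multiset.map_univ_val_equiv (Equiv.addRight (1 : Fin (len + 2)))
        rw [e1, e2]
        simp only [a, Multiset.map_map]
      have hmem : q 0 ∈ b + u :=
        Multiset.mem_add.mpr (Or.inl (Multiset.mem_map_of_mem q (Finset.mem_univ_val 0)))
      have hcard : (b + u).card = N + 1 := by
        rw [← hs]
        simp [a, b]
      have hc := common (b + u) t (q 0) hcard hmem (hq 0)
        (by rw [← hh, Multiset.map_add, Multiset.map_add, hah])
        (by rw [← hv, Multiset.map_add, Multiset.map_add, hav])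
      have ha1 : (a.map (fun x => (X x : MvPolynomial P K))).prod = ∏ k, X (p k) := by
        simp only [a, Multiset.map_map]
        rfl
      have hb1 : (b.map (fun x => (X x : MvPolynomial P K))).prod = ∏ k, X (q k) := by
        simp only [b, Multiset.map_map]
        rfl
      rw [Multiset.map_add, Multiset.prod_add, hb1] at hc
      rw [Multiset.map_add, Multiset.prod_add, ha1]
      have := I.add_mem (I.mul_mem_right ((u.map (fun x => (X x : MvPolynomial P K))).prod) hcyc) hc
      convert this using 1
      ring
    · push Not at hdisj
      obtain ⟨x, hxs, hxt⟩ := hdisj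
      exact common s t x hs hxs hxt hh hv

/-- The exponent of the image of a monomial. -/
noncomputable def s7Exp {P A B : Type*} (h : P → A) (v : P → B) (u : P →₀ ℕ) : (A ⊕ B) →₀ ℕ :=
  u.mapDomain (fun p => Sum.inl (h p)) + u.mapDomain (fun p => Sum.inr (v p))

theorem s7_aeval_monomial {P A B K : Type*} [Field K] (h : P → A) (v : P → B) (u : P →₀ ℕ) :
    (aeval (fun p => (X (Sum.inl (h p)) * X (Sum.inr (v p)) : MvPolynomial (A ⊕ B) K)))
      (monomial u (1 : K)) = monomial (s7Exp h v u) 1 := by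
  induction u using Finsupp.induction_linear with
  | zero => simp [s7Exp]
  | add f g hf hg =>
    have e1 : (monomial (f + g) (1 : K)) = monomial f 1 * monomial g 1 := by
      simp [monomial_mul]
    have e2 : s7Exp h v (f + g) = s7Exp h v f + s7Exp h v g := by
      simp only [s7Exp, Finsupp.mapDomain_add]
      abel
    rw [e1, map_mul, hf, hg, e2, monomial_mul, one_mul]
  | single p k =>
    rw [← X_pow_eq_monomial, map_pow, aeval_X, mul_pow, X_pow_eq_monomial, X_pow_eq_monomial,
      monomial_mul]
    simp [s7Exp]

theorem s7Exp_left {P A B : Type*} (h : P → A) (v : P → B) {u w : P →₀ ℕ}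
    (e : s7Exp h v u = s7Exp h v w) : u.mapDomain h = w.mapDomain h := by
  have key : ∀ (u : P →₀ ℕ) a, s7Exp h v u (Sum.inl a) = u.mapDomain h a := by
    intro u a
    have h1 : u.mapDomain (fun p => (Sum.inl (h p) : A ⊕ B)) = (u.mapDomain h).mapDomain Sum.inl :=
      Finsupp.mapDomain_comp
    have h2 : u.mapDomain (fun p => (Sum.inr (v p) : A ⊕ B)) (Sum.inl a) = 0 :=
      Finsupp.mapDomain_of_notMem_range _ _ (by simp)
    rw [s7Exp, Finsupp.add_apply, h1, h2, Finsupp.mapDomain_apply Sum.inl_injective, add_zero]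
  ext a
  rw [← key, ← key, e]

theorem s7Exp_right {P A B : Type*} (h : P → A) (v : P → B) {u w : P →₀ ℕ}
    (e : s7Exp h v u = s7Exp h v w) : u.mapDomain v = w.mapDomain v := by
  have key : ∀ (u : P →₀ ℕ) a, s7Exp h v u (Sum.inr a) = u.mapDomain v a := by
    intro u a
    have h1 : u.mapDomain (fun p => (Sum.inr (v p) : A ⊕ B)) = (u.mapDomain v).mapDomain Sum.inr :=
      Finsupp.mapDomain_comp
    have h2 : u.mapDomain (fun p => (Sum.inl (h p) : A ⊕ B)) (Sum.inr a) = 0 :=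
      Finsupp.mapDomain_of_notMem_range _ _ (by simp)
    rw [s7Exp, Finsupp.add_apply, h1, h2, Finsupp.mapDomain_apply Sum.inr_injective, zero_add]
  ext a
  rw [← key, ← key, e]

theorem s7_monomial_eq {P K : Type*} [Field K] (u : P →₀ ℕ) :
    (monomial u (1 : K)) = ((Finsupp.toMultiset u).map (fun x => X x)).prod := by
  rw [Finsupp.toMultiset_map, Finsupp.prod_toMultiset, Finsupp.prod_mapDomain_index
    (by simp) (by intros; rw [pow_add]), monomial_eq]
  simp

/-- The kernel of the toric map is contained in any ideal containing the cycle binomials. -/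
theorem s7_ker_le {P A B K : Type*} [Field K] (h : P → A) (v : P → B)
    (hinj : ∀ x y, h x = h y → v x = v y → x = y) (I : Ideal (MvPolynomial P K))
    (hI : ∀ (len : ℕ) (p q : Fin (len + 2) → P), (∀ k l, p k ≠ q l) →
      (∀ k, v (p k) = v (q k)) → (∀ k, h (q k) = h (p (k + 1))) →
      (Function.Injective fun k => h (p k)) → (Function.Injective fun k => v (p k)) →
      (∏ k, (X (p k) : MvPolynomial P K)) - ∏ k, X (q k) ∈ I) (f : MvPolynomial P K)
    (hf : (aeval (fun p => (X (Sum.inl (h p)) * X (Sum.inr (v p)) : MvPolynomial (A ⊕ B) K))) f = 0) :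
    f ∈ I := by
  have hbin : ∀ u w : P →₀ ℕ, s7Exp h v u = s7Exp h v w →
      monomial u (1 : K) - monomial w 1 ∈ I := by
    intro u w e
    rw [s7_monomial_eq, s7_monomial_eq]
    refine s7_binom_mem h v hinj I hI _ _ _ rfl ?_ ?_
    · rw [Finsupp.toMultiset_map, Finsupp.toMultiset_map, s7Exp_left h v e]
    · rw [Finsupp.toMultiset_map, Finsupp.toMultiset_map, s7Exp_right h v e]
  let L : MvPolynomial (A ⊕ B) K →ₗ[K] MvPolynomial P K :=
    (basisMonomials (A ⊕ B) K).constr K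
      (fun w => monomial (Function.invFun (s7Exp h v) w) (1 : K))
  have hL : ∀ w, L (monomial w 1) = monomial (Function.invFun (s7Exp h v) w) (1 : K) := by
    intro w
    have := (basisMonomials (A ⊕ B) K).constr_basis K
      (fun w => monomial (Function.invFun (s7Exp h v) w) (1 : K)) w
    simpa [L] using this
  have main : ∀ f : MvPolynomial P K, f - L ((aeval (fun p => (X (Sum.inl (h p)) *
      X (Sum.inr (v p)) : MvPolynomial (A ⊕ B) K))) f) ∈ I := by
    intro f
    induction f using MvPolynomial.induction_on' with
    | monomial u a =>
      have := hbin u (Function.invFun (s7Exp h v) (s7Exp h v u))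
        (Function.invFun_eq ⟨u, rfl⟩).symm
      have e : (monomial u a : MvPolynomial P K) = a • monomial u (1 : K) := by
        simp [smul_monomial]
      rw [e, map_smul, map_smul, s7_aeval_monomial, hL, ← smul_sub, smul_eq_C_mul]
      exact I.mul_mem_left _ this
    | add f g hf hg =>
      have := I.add_mem hf hg
      rw [map_add, map_add]
      convert this using 1
      ring
  have := main f
  rwa [hf, map_zero, sub_zero] at this

/-! ### Vertical and horizontal classes -/

section S7

variable {m n : ℕ}

theorem s7_vert_cases {δ : Minor2 m n} {p q : Fin m × Fin n} (h : δ.VertEdge p q) :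
    ∃ b, (b = δ.b1 ∨ b = δ.b2) ∧
      ((p = (δ.a1, b) ∧ q = (δ.a2, b)) ∨ (p = (δ.a2, b) ∧ q = (δ.a1, b))) := by
  rcases h with h | h
  · exact ⟨δ.b1, Or.inl rfl, Set.pair_eq_pair_iff.mp h⟩
  · exact ⟨δ.b2, Or.inr rfl, Set.pair_eq_pair_iff.mp h⟩

theorem s7_horiz_cases {δ : Minor2 m n} {p q : Fin m × Fin n} (h : δ.HorizEdge p q) :
    ∃ a, (a = δ.a1 ∨ a = δ.a2) ∧
      ((p = (a, δ.b1) ∧ q = (a, δ.b2)) ∨ (p = (a, δ.b2) ∧ q = (a, δ.b1))) := by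
  rcases h with h | h
  · exact ⟨δ.a1, Or.inl rfl, Set.pair_eq_pair_iff.mp h⟩
  · exact ⟨δ.a2, Or.inr rfl, Set.pair_eq_pair_iff.mp h⟩

theorem s7_mem_vertexSet (δ : Minor2 m n) {a : Fin m} {b : Fin n} (ha : a = δ.a1 ∨ a = δ.a2)
    (hb : b = δ.b1 ∨ b = δ.b2) : (a, b) ∈ δ.vertexSet := by
  rcases ha with rfl | rfl <;> rcases hb with rfl | rfl <;> simp [Minor2.vertexSet]

theorem s7_vert_mem {δ : Minor2 m n} {p q : Fin m × Fin n} (h : δ.VertEdge p q) :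
    p ∈ δ.vertexSet ∧ q ∈ δ.vertexSet := by
  obtain ⟨b, hb, ⟨rfl, rfl⟩ | ⟨rfl, rfl⟩⟩ := s7_vert_cases h <;>
  exact ⟨s7_mem_vertexSet δ (by simp) hb, s7_mem_vertexSet δ (by simp) hb⟩

theorem s7_horiz_mem {δ : Minor2 m n} {p q : Fin m × Fin n} (h : δ.HorizEdge p q) :
    p ∈ δ.vertexSet ∧ q ∈ δ.vertexSet := by
  obtain ⟨b, hb, ⟨rfl, rfl⟩ | ⟨rfl, rfl⟩⟩ := s7_horiz_cases h <;>
  exact ⟨s7_mem_vertexSet δ hb (by simp), s7_mem_vertexSet δ hb (by simp)⟩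

theorem s7_mem_of {D : Set (Minor2 m n)} {δ : Minor2 m n} (hδ : δ ∈ D) {p : Fin m × Fin n}
    (hp : p ∈ δ.vertexSet) : p ∈ vertexSetOf D :=
  Set.mem_biUnion hδ hp

theorem s7_hClass_fst {D : Set (Minor2 m n)} {p q : Fin m × Fin n}
    (h : hClass D p = hClass D q) : p.1 = q.1 := by
  refine congrArg (Quot.lift (fun p : Fin m × Fin n => p.1) ?_) h
  rintro a b ⟨δ, -, hδ⟩
  obtain ⟨b, hb, ⟨rfl, rfl⟩ | ⟨rfl, rfl⟩⟩ := s7_horiz_cases hδ <;> rfl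

theorem s7_vClass_snd {D : Set (Minor2 m n)} {p q : Fin m × Fin n}
    (h : vClass D p = vClass D q) : p.2 = q.2 := by
  refine congrArg (Quot.lift (fun p : Fin m × Fin n => p.2) ?_) h
  rintro a b ⟨δ, -, hδ⟩
  obtain ⟨b, hb, ⟨rfl, rfl⟩ | ⟨rfl, rfl⟩⟩ := s7_vert_cases hδ <;> rfl

theorem s7_class_inj {D : Set (Minor2 m n)} (p q : Fin m × Fin n)
    (h : hClass D p = hClass D q) (h' : vClass D p = vClass D q) : p = q :=
  Prod.ext (s7_hClass_fst h) (s7_vClass_snd h')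

/-- A position outside `V(D)` is alone in its vertical class. -/
theorem s7_vClass_alone {D : Set (Minor2 m n)} {p q : Fin m × Fin n}
    (h : vClass D p = vClass D q) (hp : p ∉ vertexSetOf D) : q = p := by
  have : (p = p) = (q = p) := by
    refine congrArg (Quot.lift (fun x : Fin m × Fin n => (x = p)) ?_) h
    rintro a b ⟨δ, hD, hδ⟩
    have := s7_vert_mem hδ
    have ha := s7_mem_of hD this.1
    have hb := s7_mem_of hD this.2
    have ha' : a ≠ p := fun e => hp (e ▸ ha)
    have hb' : b ≠ p := fun e => hp (e ▸ hb)
    simp [ha', hb']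
  simpa using this

theorem s7_hClass_alone {D : Set (Minor2 m n)} {p q : Fin m × Fin n}
    (h : hClass D p = hClass D q) (hp : p ∉ vertexSetOf D) : q = p := by
  have : (p = p) = (q = p) := by
    refine congrArg (Quot.lift (fun x : Fin m × Fin n => (x = p)) ?_) h
    rintro a b ⟨δ, hD, hδ⟩
    have := s7_horiz_mem hδ
    have ha := s7_mem_of hD this.1
    have hb := s7_mem_of hD this.2
    have ha' : a ≠ p := fun e => hp (e ▸ ha)
    have hb' : b ≠ p := fun e => hp (e ▸ hb)
    simp [ha', hb']
  simpa using this

theorem s7_not_mem_avoiding {C : Set (Minor2 m n)} {W : Set (Fin m × Fin n)} {p : Fin m × Fin n}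
    (hp : p ∈ W) : p ∉ vertexSetOf (minorsAvoiding C W) := by
  intro h
  obtain ⟨δ, hδ, hpδ⟩ := Set.mem_iUnion₂.mp h
  have : p ∈ δ.vertexSet ∩ W := ⟨hpδ, hp⟩
  rw [hδ.2] at this
  exact this

variable (K : Type*) [Field K]

theorem s7_phi_X (D : Set (Minor2 m n)) (p : Fin m × Fin n) :
    phiC K D (X p) = X (Sum.inl (hClass D p)) * X (Sum.inr (vClass D p)) := by
  simp [phiC]

theorem s7_cycle_mem {D : Set (Minor2 m n)} (σ : CycleIn D) :
    cycleBinom K σ ∈ toricIdeal K D := by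
  rw [toricIdeal, RingHom.mem_ker, cycleBinom, map_sub, map_prod, map_prod, sub_eq_zero]
  simp only [s7_phi_X, Finset.prod_mul_distrib, σ.shareV, σ.shareH]
  congr 1
  exact (Equiv.prod_comp (Equiv.addRight (1 : Fin (σ.len + 2)))
    (fun k => (X (Sum.inl (hClass D (σ.p k))) :
      MvPolynomial (Quot (horizAdj D) ⊕ Quot (vertAdj D)) K))).symm

theorem s7_toric_le {D : Set (Minor2 m n)} (I : Ideal (MvPolynomial (Fin m × Fin n) K))
    (hI : ∀ σ : CycleIn D, cycleBinom K σ ∈ I) : toricIdeal K D ≤ I := by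
  intro f hf
  refine s7_ker_le (hClass D) (vClass D) s7_class_inj I ?_ f hf
  intro len p q hne hpq hqp injH injV
  have hp : ∀ k, p k ∈ vertexSetOf D := by
    intro k
    by_contra hk
    exact hne k k (s7_vClass_alone (hpq k) hk).symm
  have hq : ∀ k, q k ∈ vertexSetOf D := by
    intro k
    by_contra hk
    exact hne k k (s7_vClass_alone (hpq k).symm hk)
  exact hI ⟨len, p, q, hp, hq, hpq, hqp, injH, injV⟩

open Classical in
/-- Setting the variables in `W` to zero. -/
noncomputable def s7Theta (W : Set (Fin m × Fin n)) :
    MvPolynomial (Fin m × Fin n) K →ₐ[K] MvPolynomial (Fin m × Fin n) K :=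
  aeval fun p => if p ∈ W then 0 else X p

theorem s7_sub_theta (W : Set (Fin m × Fin n)) (f : MvPolynomial (Fin m × Fin n) K) :
    f - s7Theta K W f ∈ varIdeal K W := by
  classical
  have e : (Ideal.Quotient.mkₐ K (varIdeal K W)).comp (s7Theta K W) =
      Ideal.Quotient.mkₐ K (varIdeal K W) := by
    apply MvPolynomial.algHom_ext
    intro p
    by_cases hp : p ∈ W
    · have : (X p : MvPolynomial (Fin m × Fin n) K) ∈ varIdeal K W :=
        Ideal.subset_span ⟨p, hp, rfl⟩
      simp [s7Theta, hp, Ideal.Quotient.eq_zero_iff_mem.mpr this]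
    · simp [s7Theta, hp]
  have := DFunLike.congr_fun e f
  rw [← Ideal.Quotient.eq]
  exact this.symm

theorem s7_PW_eq (C : Set (Minor2 m n)) (W : Set (Fin m × Fin n)) :
    PW K C W = RingHom.ker ((phiC K (minorsAvoiding C W)).comp (s7Theta K W)) := by
  classical
  apply le_antisymm
  · rw [PW, Submodule.add_eq_sup, sup_le_iff]
    constructor
    · rw [varIdeal, Ideal.span_le]
      rintro _ ⟨p, hp, rfl⟩
      simp [RingHom.mem_ker, s7Theta, hp]
    · intro f hf
      set D := minorsAvoiding C W with hD
      let κ : MvPolynomial (Quot (horizAdj D) ⊕ Quot (vertAdj D)) K →ₐ[K]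
          MvPolynomial (Quot (horizAdj D) ⊕ Quot (vertAdj D)) K :=
        aeval (Sum.elim (fun a => if ∃ p ∈ W, a = hClass D p then 0 else X (Sum.inl a))
          (fun b => X (Sum.inr b)))
      have e : (phiC K D).comp (s7Theta K W) = κ.comp (phiC K D) := by
        apply MvPolynomial.algHom_ext
        intro p
        by_cases hp : p ∈ W
        · have : ∃ p' ∈ W, hClass D p = hClass D p' := ⟨p, hp, rfl⟩
          simp only [AlgHom.comp_apply, s7Theta, aeval_X, hp, s7_phi_X, κ, map_mul, this,
            Sum.elim_inl, Sum.elim_inr, if_true, zero_mul, map_zero]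
        · have : ¬ ∃ p' ∈ W, hClass D p = hClass D p' := by
            rintro ⟨p', hp', he⟩
            have := s7_hClass_alone he.symm (s7_not_mem_avoiding hp')
            exact hp (this ▸ hp')
          simp only [AlgHom.comp_apply, s7Theta, aeval_X, hp, s7_phi_X, κ, map_mul, this,
            Sum.elim_inl, Sum.elim_inr, if_false]
      rw [RingHom.mem_ker, e, AlgHom.comp_apply]
      have hf' : phiC K D f = 0 := hf
      rw [hf', map_zero]
  · intro f hf
    have h1 : s7Theta K W f ∈ toricIdeal K (minorsAvoiding C W) := hf
    have h2 := s7_sub_theta K W f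
    have := Submodule.add_mem_sup h2 h1
    rwa [sub_add_cancel] at this

theorem s7_PW_prime (C : Set (Minor2 m n)) (W : Set (Fin m × Fin n)) : (PW K C W).IsPrime := by
  rw [s7_PW_eq]
  exact RingHom.ker_isPrime _

theorem s7_prod_phi_ne {ι : Type*} [Fintype ι] (D : Set (Minor2 m n)) (p : ι → Fin m × Fin n) :
    phiC K D (∏ k, X (p k)) ≠ 0 := by
  rw [map_prod, Finset.prod_ne_zero_iff]
  intro k _
  rw [s7_phi_X]
  exact mul_ne_zero (X_ne_zero _) (X_ne_zero _)

theorem s7_theta_notin {ι : Type*} [Fintype ι] (W : Set (Fin m × Fin n)) (p : ι → Fin m × Fin n)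
    (hp : ∀ k, p k ∉ W) : s7Theta K W (∏ k, X (p k)) = ∏ k, X (p k) := by
  rw [map_prod]
  refine Finset.prod_congr rfl fun k _ => ?_
  simp [s7Theta, hp k]

theorem s7_theta_in {ι : Type*} [Fintype ι] (W : Set (Fin m × Fin n)) (p : ι → Fin m × Fin n)
    (k : ι) (hp : p k ∈ W) : s7Theta K W (∏ k, X (p k)) = 0 := by
  rw [map_prod]
  refine Finset.prod_eq_zero (Finset.mem_univ k) ?_
  simp [s7Theta, hp]

theorem s7_X_mem (C : Set (Minor2 m n)) (W : Set (Fin m × Fin n)) (p : Fin m × Fin n) :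
    (X p : MvPolynomial (Fin m × Fin n) K) ∈ PW K C W ↔ p ∈ W := by
  constructor
  · intro h
    by_contra hp
    rw [s7_PW_eq, RingHom.mem_ker, AlgHom.comp_apply] at h
    have e : s7Theta K W (X p) = X p := by simp [s7Theta, hp]
    rw [e, s7_phi_X] at h
    exact mul_ne_zero (X_ne_zero _) (X_ne_zero _) h
  · intro hp
    exact Submodule.mem_sup_left (Ideal.subset_span ⟨p, hp, rfl⟩)

/-- If one monomial avoids `V` and the binomial is not in `J`, it is not in `P_V`. -/
theorem s7_diff_notin {ι : Type*} [Fintype ι] (C : Set (Minor2 m n)) (V : Set (Fin m × Fin n))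
    (p q : ι → Fin m × Fin n) (hp : ∀ k, p k ∉ V)
    (hn : (∏ k, X (p k)) - (∏ k, X (q k)) ∉ toricIdeal K (minorsAvoiding C V)) :
    (∏ k, X (p k)) - (∏ k, X (q k)) ∉ PW K C V := by
  intro h
  rw [s7_PW_eq, RingHom.mem_ker, AlgHom.comp_apply, map_sub, s7_theta_notin K V p hp] at h
  by_cases hq : ∀ k, q k ∉ V
  · rw [s7_theta_notin K V q hq] at h
    exact hn h
  · push Not at hq
    obtain ⟨k, hk⟩ := hq
    rw [s7_theta_in K V q k hk, sub_zero] at h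
    exact s7_prod_phi_ne K _ p h

theorem s7_minorIdeal_le (C : Set (Minor2 m n)) (W : Set (Fin m × Fin n)) (hW : Admissible C W) :
    minorIdeal K C ≤ PW K C W := by
  rw [minorIdeal, Ideal.span_le]
  rintro _ ⟨δ, hδ, rfl⟩
  rcases hW.2 δ hδ with h | ⟨p, q, hp, hq, he⟩
  · refine Submodule.mem_sup_right ?_
    have hD : δ ∈ minorsAvoiding C W := ⟨hδ, by rw [Set.inter_comm]; exact h⟩
    have e1 : vClass (minorsAvoiding C W) (δ.a1, δ.b1) = vClass _ (δ.a2, δ.b1) :=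
      Quot.sound ⟨δ, hD, Or.inl rfl⟩
    have e2 : vClass (minorsAvoiding C W) (δ.a1, δ.b2) = vClass _ (δ.a2, δ.b2) :=
      Quot.sound ⟨δ, hD, Or.inr rfl⟩
    have e3 : hClass (minorsAvoiding C W) (δ.a1, δ.b1) = hClass _ (δ.a1, δ.b2) :=
      Quot.sound ⟨δ, hD, Or.inl rfl⟩
    have e4 : hClass (minorsAvoiding C W) (δ.a2, δ.b1) = hClass _ (δ.a2, δ.b2) :=
      Quot.sound ⟨δ, hD, Or.inr rfl⟩
    rw [toricIdeal, RingHom.mem_ker, Minor2.binom, map_sub, map_mul, map_mul]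
    simp only [s7_phi_X, e1, e2, e3, e4]
    ring
  · have hp' := (s7_X_mem K C W p).mpr hp
    have hq' := (s7_X_mem K C W q).mpr hq
    rw [Minor2.binom]
    rcases he with he | he
    · obtain ⟨b, rfl | rfl, ⟨rfl, rfl⟩ | ⟨rfl, rfl⟩⟩ := s7_vert_cases he
      · exact Ideal.sub_mem _ (Ideal.mul_mem_right _ _ hp') (Ideal.mul_mem_left _ _ hq')
      · exact Ideal.sub_mem _ (Ideal.mul_mem_right _ _ hq') (Ideal.mul_mem_left _ _ hp')
      · exact Ideal.sub_mem _ (Ideal.mul_mem_left _ _ hq') (Ideal.mul_mem_right _ _ hp')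
      · exact Ideal.sub_mem _ (Ideal.mul_mem_left _ _ hp') (Ideal.mul_mem_right _ _ hq')
    · obtain ⟨b, rfl | rfl, ⟨rfl, rfl⟩ | ⟨rfl, rfl⟩⟩ := s7_horiz_cases he
      · exact Ideal.sub_mem _ (Ideal.mul_mem_right _ _ hp') (Ideal.mul_mem_right _ _ hq')
      · exact Ideal.sub_mem _ (Ideal.mul_mem_right _ _ hq') (Ideal.mul_mem_right _ _ hp')
      · exact Ideal.sub_mem _ (Ideal.mul_mem_left _ _ hq') (Ideal.mul_mem_left _ _ hp')
      · exact Ideal.sub_mem _ (Ideal.mul_mem_left _ _ hp') (Ideal.mul_mem_left _ _ hq')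

theorem s7_zero_admissible (C : Set (Minor2 m n)) (Q : Ideal (MvPolynomial (Fin m × Fin n) K))
    [Q.IsPrime] (hQ : minorIdeal K C ≤ Q) :
    Admissible C {p | p ∈ vertexSetOf C ∧ X p ∈ Q} := by
  refine ⟨fun p hp => hp.1, fun δ hδ => ?_⟩
  have hb : Minor2.binom K δ ∈ Q := hQ (Ideal.subset_span ⟨δ, hδ, rfl⟩)
  rw [Minor2.binom] at hb
  rw [or_iff_not_imp_left]
  intro hne
  obtain ⟨p, ⟨-, hpQ⟩, hpδ⟩ := Set.nonempty_iff_ne_empty.mpr hne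
  have hm : ∀ {a : Fin m} {b : Fin n}, (a = δ.a1 ∨ a = δ.a2) → (b = δ.b1 ∨ b = δ.b2) →
      (a, b) ∈ vertexSetOf C := fun ha hb => s7_mem_of hδ (s7_mem_vertexSet δ ha hb)
  have hm1 : (δ.a1, δ.b1) ∈ vertexSetOf C := hm (by simp) (by simp)
  have hm2 : (δ.a1, δ.b2) ∈ vertexSetOf C := hm (by simp) (by simp)
  have hm3 : (δ.a2, δ.b1) ∈ vertexSetOf C := hm (by simp) (by simp)
  have hm4 : (δ.a2, δ.b2) ∈ vertexSetOf C := hm (by simp) (by simp)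
  have hd : (X (δ.a1, δ.b1) * X (δ.a2, δ.b2) : MvPolynomial (Fin m × Fin n) K) ∈ Q ↔
      (X (δ.a1, δ.b2) * X (δ.a2, δ.b1) : MvPolynomial (Fin m × Fin n) K) ∈ Q :=
    ⟨fun h => by simpa using Q.sub_mem h hb, fun h => by simpa using Q.add_mem hb h⟩
  have hpr : ∀ {f g : MvPolynomial (Fin m × Fin n) K}, f * g ∈ Q → f ∈ Q ∨ g ∈ Q :=
    fun h => Ideal.IsPrime.mem_or_mem ‹_› h
  have both : ((X (δ.a1, δ.b1) : MvPolynomial (Fin m × Fin n) K) ∈ Q ∨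
      (X (δ.a2, δ.b2) : MvPolynomial (Fin m × Fin n) K) ∈ Q) ∧
      ((X (δ.a1, δ.b2) : MvPolynomial (Fin m × Fin n) K) ∈ Q ∨
      (X (δ.a2, δ.b1) : MvPolynomial (Fin m × Fin n) K) ∈ Q) := by
    rcases hpδ with rfl | rfl | rfl | rfl
    · have h1 := Q.mul_mem_right (X (δ.a2, δ.b2)) hpQ
      exact ⟨hpr h1, hpr (hd.mp h1)⟩
    · have h1 := Q.mul_mem_right (X (δ.a2, δ.b1)) hpQ
      exact ⟨hpr (hd.mpr h1), hpr h1⟩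
    · have h1 := Q.mul_mem_left (X (δ.a1, δ.b2)) hpQ
      exact ⟨hpr (hd.mpr h1), hpr h1⟩
    · have h1 := Q.mul_mem_left (X (δ.a1, δ.b1)) hpQ
      exact ⟨hpr h1, hpr (hd.mp h1)⟩
  rcases both with ⟨h1 | h1, h2 | h2⟩
  · exact ⟨_, _, ⟨hm1, h1⟩, ⟨hm2, h2⟩, Or.inr (Or.inl rfl)⟩
  · exact ⟨_, _, ⟨hm1, h1⟩, ⟨hm3, h2⟩, Or.inl (Or.inl rfl)⟩
  · exact ⟨_, _, ⟨hm2, h2⟩, ⟨hm4, h1⟩, Or.inl (Or.inr rfl)⟩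
  · exact ⟨_, _, ⟨hm3, h2⟩, ⟨hm4, h1⟩, Or.inr (Or.inr rfl)⟩

/-- A prime containing `I(D)` and no variable of `V(D)` contains the toric ideal `J_D`. -/
theorem s7_toric_le_prime [NeZero n] (D : Set (Minor2 m n)) (hD : ∀ δ ∈ D, δ.b1 = 0)
    (Q : Ideal (MvPolynomial (Fin m × Fin n) K)) [Q.IsPrime] (hQ : minorIdeal K D ≤ Q)
    (hX : ∀ p ∈ vertexSetOf D, (X p : MvPolynomial (Fin m × Fin n) K) ∉ Q) :
    toricIdeal K D ≤ Q := by
  classical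
  let F := FractionRing (MvPolynomial (Fin m × Fin n) K ⧸ Q)
  let ev : MvPolynomial (Fin m × Fin n) K →ₐ[K] F :=
    (IsScalarTower.toAlgHom K (MvPolynomial (Fin m × Fin n) K ⧸ Q) F).comp
      (Ideal.Quotient.mkₐ K Q)
  have hev : ∀ f, ev f = 0 ↔ f ∈ Q := by
    intro f
    have : ev f = algebraMap (MvPolynomial (Fin m × Fin n) K ⧸ Q) F (Ideal.Quotient.mk Q f) := rfl
    rw [this, ← Ideal.Quotient.eq_zero_iff_mem]
    exact map_eq_zero_iff _ (IsFractionRing.injective _ F)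
  let x : Fin m × Fin n → F := fun p => ev (X p)
  have hx : ∀ p ∈ vertexSetOf D, x p ≠ 0 := fun p hp h => hX p hp ((hev _).mp h)
  have hrel : ∀ δ ∈ D, x (δ.a1, δ.b1) * x (δ.a2, δ.b2) = x (δ.a1, δ.b2) * x (δ.a2, δ.b1) := by
    intro δ hδ
    have : ev (Minor2.binom K δ) = 0 := (hev _).mpr (hQ (Ideal.subset_span ⟨δ, hδ, rfl⟩))
    rw [Minor2.binom, map_sub, map_mul, map_mul, sub_eq_zero] at this
    exact this
  have h0 : ∀ p ∈ vertexSetOf D, (p.1, (0 : Fin n)) ∈ vertexSetOf D := by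
    intro p hp
    obtain ⟨δ, hδ, hpδ⟩ := Set.mem_iUnion₂.mp hp
    refine s7_mem_of hδ (s7_mem_vertexSet δ ?_ (Or.inl (hD δ hδ).symm))
    rcases hpδ with rfl | rfl | rfl | rfl <;> simp
  let hf : Quot (horizAdj D) → F := Quot.lift
    (fun p => if p ∈ vertexSetOf D then x (p.1, 0) else x p) (by
      rintro p q ⟨δ, hδ, he⟩
      have hp := s7_mem_of hδ (s7_horiz_mem he).1
      have hq := s7_mem_of hδ (s7_horiz_mem he).2
      obtain ⟨b, hb, ⟨rfl, rfl⟩ | ⟨rfl, rfl⟩⟩ := s7_horiz_cases he <;> simp [hp, hq])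
  let vf : Quot (vertAdj D) → F := Quot.lift
    (fun p => if p ∈ vertexSetOf D then x p / x (p.1, 0) else 1) (by
      have key : ∀ δ ∈ D, ∀ b, (b = δ.b1 ∨ b = δ.b2) →
          x (δ.a1, b) / x (δ.a1, 0) = x (δ.a2, b) / x (δ.a2, 0) := by
        intro δ hδ b hb
        have m1 : (δ.a1, δ.b1) ∈ vertexSetOf D :=
          s7_mem_of hδ (s7_mem_vertexSet δ (by simp) (by simp))
        have m2 : (δ.a2, δ.b1) ∈ vertexSetOf D :=
          s7_mem_of hδ (s7_mem_vertexSet δ (by simp) (by simp))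
        have hr := hrel δ hδ
        have n1 := hx _ m1
        have n2 := hx _ m2
        rw [hD δ hδ] at hr n1 n2 hb
        rw [div_eq_div_iff n1 n2]
        rcases hb with rfl | rfl
        · ring
        · rw [← hr]; ring
      rintro p q ⟨δ, hδ, he⟩
      have hp := s7_mem_of hδ (s7_vert_mem he).1
      have hq := s7_mem_of hδ (s7_vert_mem he).2
      simp only [hp, hq, if_true]
      obtain ⟨b, hb, ⟨rfl, rfl⟩ | ⟨rfl, rfl⟩⟩ := s7_vert_cases he
      · exact key δ hδ b hb
      · exact (key δ hδ b hb).symm)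
  let κ : MvPolynomial (Quot (horizAdj D) ⊕ Quot (vertAdj D)) K →ₐ[K] F :=
    aeval (Sum.elim hf vf)
  have e : ev = κ.comp (phiC K D) := by
    apply MvPolynomial.algHom_ext
    intro p
    have h1 : hf (hClass D p) = if p ∈ vertexSetOf D then x (p.1, 0) else x p := rfl
    have h2 : vf (vClass D p) = if p ∈ vertexSetOf D then x p / x (p.1, 0) else 1 := rfl
    rw [AlgHom.comp_apply κ, s7_phi_X, map_mul]
    simp only [κ, aeval_X, Sum.elim_inl, Sum.elim_inr, h1, h2]
    by_cases hp : p ∈ vertexSetOf D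
    · simp only [hp, if_true]
      rw [mul_div_cancel₀ _ (hx _ (h0 p hp))]
    · simp only [hp, if_false, mul_one]
      rfl
  intro f hf'
  have hf'' : phiC K D f = 0 := hf'
  rw [← hev, e, AlgHom.comp_apply, hf'', map_zero]

end S7

theorem statement7 (K : Type*) [Field K] (m n : ℕ) [NeZero n]
    (C : Set (Minor2 m n)) (hC : ∀ δ ∈ C, δ.b1 = 0)
    (V : Set (Fin m × Fin n)) (hV : Admissible C V) :
    PW K C V ∈ (minorIdeal K C).minimalPrimes ↔
      ∀ W : Set (Fin m × Fin n), Admissible C W → W ⊂ V →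
        ∃ σ : CycleIn (minorsAvoiding C W),
          cycleBinom K σ ∈ toricIdeal K (minorsAvoiding C W) ∧
          cycleBinom K σ ∉ toricIdeal K (minorsAvoiding C V) ∧
          ((∀ k, σ.p k ∉ V) ∨ (∀ l, σ.q l ∉ V)) := by
  constructor
  · intro hmin W hW hWV
    by_contra hcon
    push Not at hcon
    have hle : toricIdeal K (minorsAvoiding C W) ≤ PW K C V := by
      apply s7_toric_le
      intro σ
      by_cases hσ : cycleBinom K σ ∈ toricIdeal K (minorsAvoiding C V)
      · exact Submodule.mem_sup_right hσ
      · obtain ⟨⟨k, hk⟩, ⟨l, hl⟩⟩ := hcon σ (s7_cycle_mem K σ) hσ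
        refine Ideal.sub_mem _ ?_ ?_
        · exact Ideal.mem_of_dvd _ (Finset.dvd_prod_of_mem _ (Finset.mem_univ k))
            ((s7_X_mem K C V _).mpr hk)
        · exact Ideal.mem_of_dvd _ (Finset.dvd_prod_of_mem _ (Finset.mem_univ l))
            ((s7_X_mem K C V _).mpr hl)
    have hPW : PW K C W ≤ PW K C V := by
      refine sup_le ?_ hle
      rw [varIdeal, Ideal.span_le]
      rintro _ ⟨p, hp, rfl⟩
      exact (s7_X_mem K C V p).mpr (hWV.1 hp)
    have hge := hmin.2 ⟨s7_PW_prime K C W, s7_minorIdeal_le K C W hW⟩ hPW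
    exact hWV.2 fun p hp => (s7_X_mem K C W p).mp (hge ((s7_X_mem K C V p).mpr hp))
  · intro hcyc
    refine ⟨⟨s7_PW_prime K C V, s7_minorIdeal_le K C V hV⟩, ?_⟩
    rintro Q ⟨hQp, hIQ⟩ hQV
    have hQV' : Q ≤ PW K C V := hQV
    let W : Set (Fin m × Fin n) := {p | p ∈ vertexSetOf C ∧ X p ∈ Q}
    have hW : Admissible C W := s7_zero_admissible K C Q hIQ
    have hWV : W ⊆ V := fun p hp => (s7_X_mem K C V p).mp (hQV' hp.2)
    have hJ : toricIdeal K (minorsAvoiding C W) ≤ Q := by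
      refine s7_toric_le_prime K _ (fun δ hδ => hC δ hδ.1) Q ?_ ?_
      · refine le_trans (Ideal.span_mono ?_) hIQ
        rintro _ ⟨δ, hδ, rfl⟩
        exact ⟨δ, hδ.1, rfl⟩
      · intro p hp hpQ
        obtain ⟨δ, hδ, hpδ⟩ := Set.mem_iUnion₂.mp hp
        exact s7_not_mem_avoiding (W := W) ⟨s7_mem_of hδ.1 hpδ, hpQ⟩ hp
    have hPWQ : PW K C W ≤ Q := by
      refine sup_le ?_ hJ
      rw [varIdeal, Ideal.span_le]
      rintro _ ⟨p, hp, rfl⟩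
      exact hp.2
    rcases hWV.eq_or_ssubset with heq | hss
    · rw [heq] at hPWQ
      exact hPWQ
    · exfalso
      obtain ⟨σ, h1, h2, h3⟩ := hcyc W hW hss
      have hmem : cycleBinom K σ ∈ PW K C V := hQV' (hJ h1)
      rcases h3 with h3 | h3
      · exact s7_diff_notin K C V σ.p σ.q h3 h2 hmem
      · refine s7_diff_notin K C V σ.q σ.p h3 ?_ ?_
        · intro h
          apply h2
          rw [cycleBinom, ← neg_sub]
          exact (toricIdeal K _).neg_mem h
        · rw [← neg_sub]
          exact (PW K C V).neg_mem hmem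
end

section
/- Let C be an arbitrary set of corner minors of M and let W be an admissible set of C such that P_W(C) is a minimal prime of I(C). If W ≠ ∅, then x₁₁ ∈ W, and moreover P_W(C) is generated by variables, i.e., P_W(C) = (x_{ij} : x_{ij} ∈ W). -/
open MvPolynomial

theorem aux_x00_notMem (K : Type*) [Field K] {m n : ℕ}
    (C : Set (Minor2 m n)) (W : Set (Fin m × Fin n)) (o : Fin m × Fin n) (ho : o ∉ W) :
    (X o : MvPolynomial (Fin m × Fin n) K) ∉ PW K C W := by
  classical
  let a : Fin m × Fin n → K := fun p => if p ∈ W then 0 else 1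
  have hle : PW K C W ≤ RingHom.ker (aeval a : MvPolynomial (Fin m × Fin n) K →ₐ[K] K) := by
    unfold PW
    rw [Submodule.add_eq_sup]
    refine sup_le ?_ ?_
    · unfold varIdeal
      rw [Ideal.span_le]
      rintro _ ⟨p, hp, rfl⟩
      simp [RingHom.mem_ker, a, hp]
    · have hwd : ∀ p q, horizAdj (minorsAvoiding C W) p q → a p = a q := by
        rintro p q ⟨δ, ⟨_, hδ⟩, he⟩
        have hv : ∀ r ∈ ({p, q} : Set (Fin m × Fin n)), r ∉ W := by
          intro r hr hrW
          have : r ∈ δ.vertexSet ∩ W := by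
            refine ⟨?_, hrW⟩
            rcases he with he | he <;> rw [he] at hr <;>
              rcases hr with rfl | rfl <;> simp [Minor2.vertexSet]
          rw [hδ] at this
          exact this
        simp [a, hv p (by simp), hv q (by simp)]
      let χ : MvPolynomial (Quot (horizAdj (minorsAvoiding C W)) ⊕
          Quot (vertAdj (minorsAvoiding C W))) K →ₐ[K] K :=
        aeval (Sum.elim (Quot.lift a hwd) (fun _ => 1))
      have hfac : (aeval a : MvPolynomial (Fin m × Fin n) K →ₐ[K] K)
          = χ.comp (phiC K (minorsAvoiding C W)) := by
        apply MvPolynomial.algHom_ext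
        intro p
        simp [χ, phiC, hClass]
      intro f hf
      have hf' : phiC K (minorsAvoiding C W) f = 0 := hf
      rw [RingHom.mem_ker, hfac, AlgHom.comp_apply, hf', map_zero]
  intro h
  have := hle h
  simp [RingHom.mem_ker, a, ho] at this

theorem aux_toric_empty (K : Type*) [Field K] {m n : ℕ} :
    toricIdeal K (∅ : Set (Minor2 m n)) = ⊥ := by
  have hh : ∀ p q : Fin m × Fin n, ¬ horizAdj ∅ p q := by
    rintro p q ⟨δ, h, _⟩; exact h
  let s : Quot (horizAdj (∅ : Set (Minor2 m n))) → Fin m × Fin n :=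
    Quot.lift id (fun p q h => (hh p q h).elim)
  let χ : MvPolynomial (Quot (horizAdj (∅ : Set (Minor2 m n))) ⊕
      Quot (vertAdj (∅ : Set (Minor2 m n)))) K →ₐ[K] MvPolynomial (Fin m × Fin n) K :=
    aeval (Sum.elim (fun c => X (s c)) (fun _ => 1))
  have hfac : χ.comp (phiC K (∅ : Set (Minor2 m n))) = AlgHom.id K _ := by
    apply MvPolynomial.algHom_ext
    intro p
    simp [χ, phiC, hClass, s]
  rw [eq_bot_iff]
  intro f hf
  have hf' : phiC K (∅ : Set (Minor2 m n)) f = 0 := hf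
  have := DFunLike.congr_fun hfac f
  rw [AlgHom.comp_apply, hf', map_zero] at this
  simpa using this.symm

theorem aux_field1 {L : Type*} [Field L] (z a : L) (hz : z ≠ 0) : z * (a / z) = a := by
  field_simp

theorem aux_field2 {L : Type*} [Field L] (z a b c : L) (hz : z ≠ 0) (h : z * c - b * a = 0) :
    z * (a / z) * (b / z) = c := by
  field_simp
  linear_combination -h

theorem aux_exists_prime (K : Type*) [Field K] (m n : ℕ) [NeZero m] [NeZero n]
    (C : Set (Minor2 m n)) (hC : ∀ δ ∈ C, δ.a1 = 0 ∧ δ.b1 = 0)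
    (P : Ideal (MvPolynomial (Fin m × Fin n) K)) [P.IsPrime] (hP : minorIdeal K C ≤ P)
    (h0 : (X (0, 0) : MvPolynomial (Fin m × Fin n) K) ∉ P) :
    ∃ Q : Ideal (MvPolynomial (Fin m × Fin n) K), Q.IsPrime ∧ minorIdeal K C ≤ Q ∧ Q ≤ P ∧
      ∀ p, X p ∉ Q := by
  classical
  let g : Fin m × Fin n → MvPolynomial (Fin m × Fin n) K := fun p =>
    if p = (0, 0) then X (0, 0)
    else if p.1 = 0 ∨ p.2 = 0 then X (0, 0) * X p
    else if ∃ δ ∈ C, p = (δ.a2, δ.b2) then X (0, 0) * X (p.1, 0) * X (0, p.2)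
    else X p
  let ψ : MvPolynomial (Fin m × Fin n) K →ₐ[K] MvPolynomial (Fin m × Fin n) K := aeval g
  have hcorner : ∀ δ ∈ C, δ.a2 ≠ 0 ∧ δ.b2 ≠ 0 := by
    intro δ hδ
    obtain ⟨h1, h2⟩ := hC δ hδ
    have ha := δ.ha
    have hb := δ.hb
    rw [h1] at ha
    rw [h2] at hb
    exact ⟨ha.ne', hb.ne'⟩
  refine ⟨RingHom.ker ψ, RingHom.ker_isPrime ψ, ?_, ?_, ?_⟩
  · unfold minorIdeal
    rw [Ideal.span_le]
    rintro _ ⟨δ, hδ, rfl⟩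
    obtain ⟨h1, h2⟩ := hC δ hδ
    obtain ⟨h3, h4⟩ := hcorner δ hδ
    have e : ∃ δ' ∈ C, (δ.a2, δ.b2) = (δ'.a2, δ'.b2) := ⟨δ, hδ, rfl⟩
    have g1 : g (0, 0) = X (0, 0) := by simp [g]
    have g2 : g (δ.a2, 0) = X (0, 0) * X (δ.a2, 0) := by simp [g, h3]
    have g3 : g (0, δ.b2) = X (0, 0) * X (0, δ.b2) := by simp [g, h4]
    have g4 : g (δ.a2, δ.b2) = X (0, 0) * X (δ.a2, 0) * X (0, δ.b2) := by
      simp only [g]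
      rw [if_neg (by simp [h3]), if_neg (by simp [h3, h4]), if_pos e]
    rw [SetLike.mem_coe, RingHom.mem_ker]
    simp only [Minor2.binom, h1, h2, ψ, map_sub, map_mul, aeval_X, g1, g2, g3, g4]
    ring
  · let L := FractionRing (MvPolynomial (Fin m × Fin n) K ⧸ P)
    let π : MvPolynomial (Fin m × Fin n) K →ₐ[K] L :=
      (IsScalarTower.toAlgHom K (MvPolynomial (Fin m × Fin n) K ⧸ P) L).comp
        (Ideal.Quotient.mkₐ K P)
    have hker : ∀ f, π f = 0 ↔ f ∈ P := by
      intro f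
      rw [← Ideal.Quotient.eq_zero_iff_mem]
      exact (IsFractionRing.injective (MvPolynomial (Fin m × Fin n) K ⧸ P) L).eq_iff'
        (map_zero _)
    have hπ0 : π (X (0, 0)) ≠ 0 := fun h => h0 ((hker _).1 h)
    let θ : MvPolynomial (Fin m × Fin n) K →ₐ[K] L := aeval fun p =>
      if p = (0, 0) then π (X (0, 0))
      else if p.1 = 0 ∨ p.2 = 0 then π (X p) / π (X (0, 0))
      else π (X p)
    have hfac : θ.comp ψ = π := by
      apply MvPolynomial.algHom_ext
      intro p
      rw [AlgHom.comp_apply]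
      simp only [ψ, aeval_X, g]
      split_ifs with c1 c2 c3
      · simp [θ, c1]
      · simp only [θ, map_mul, aeval_X, if_true, if_neg c1, if_pos c2]
        exact aux_field1 _ _ hπ0
      · obtain ⟨δ, hδ, rfl⟩ := c3
        obtain ⟨h1, h2⟩ := hC δ hδ
        obtain ⟨h3, h4⟩ := hcorner δ hδ
        have hb : π (Minor2.binom K δ) = 0 :=
          (hker _).2 (hP (Ideal.subset_span ⟨δ, hδ, rfl⟩))
        simp only [Minor2.binom, h1, h2, map_sub, map_mul] at hb
        simp only [θ, map_mul, aeval_X, if_true, Prod.mk.injEq, h3, h4, if_false, true_or,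
          or_true, and_true, true_and]
        exact aux_field2 _ _ _ _ hπ0 hb
      · simp only [θ, aeval_X, if_neg c1, if_neg c2]
    intro f hf
    have hf' : ψ f = 0 := hf
    rw [← hker, ← hfac, AlgHom.comp_apply, hf', map_zero]
  · intro p hp
    have hp' : ψ (X p) = 0 := hp
    simp only [ψ, aeval_X, g] at hp'
    split_ifs at hp' <;> simp [X_ne_zero] at hp'

theorem statement8 (K : Type*) [Field K] (m n : ℕ) [NeZero m] [NeZero n]
    (C : Set (Minor2 m n)) (hC : ∀ δ ∈ C, δ.a1 = 0 ∧ δ.b1 = 0)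
    (W : Set (Fin m × Fin n)) (hW : Admissible C W)
    (hmin : PW K C W ∈ (minorIdeal K C).minimalPrimes) (hne : W ≠ ∅) :
    ((0 : Fin m), (0 : Fin n)) ∈ W ∧ PW K C W = varIdeal K W := by
  have h00 : ((0 : Fin m), (0 : Fin n)) ∈ W := by
    by_contra h
    have : (PW K C W).IsPrime := hmin.1.1
    obtain ⟨Q, hQ, hIQ, hQP, hX⟩ := aux_exists_prime K m n C hC (PW K C W) hmin.1.2
      (aux_x00_notMem K C W _ h)
    obtain ⟨w, hw⟩ := Set.nonempty_iff_ne_empty.2 hne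
    refine hX w (hmin.2 ⟨hQ, hIQ⟩ hQP ?_)
    unfold PW
    rw [Submodule.add_eq_sup]
    exact Ideal.mem_sup_left (Ideal.subset_span ⟨w, hw, rfl⟩)
  refine ⟨h00, ?_⟩
  have he : minorsAvoiding C W = ∅ := by
    rw [Set.eq_empty_iff_forall_notMem]
    rintro δ ⟨hδ, hd⟩
    obtain ⟨h1, h2⟩ := hC δ hδ
    have : ((0 : Fin m), (0 : Fin n)) ∈ δ.vertexSet ∩ W :=
      ⟨by simp [Minor2.vertexSet, h1, h2], h00⟩
    rw [hd] at this
    exact this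
  unfold PW
  rw [he, aux_toric_empty, Submodule.add_eq_sup, sup_bot_eq]
end
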